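/- Let H be a continuous map from the closed upper half-plane to the closure of Ω* which restricts to a holomorphic bijection from the open upper half-plane ℍ onto Ω*, satisfies H(0) = 0, and satisfies H(z)/z → 1 as |z| → ∞ in ℍ. Then (1/π) · ∫₀^∞ ( Im H(t) − (π/2)·χ_{[2,∞)}(t) ) · dt/t = (1/2)·log(2π), where χ_{[2,∞)} is the characteristic function of the ray [2,∞). -/

import Mathlib

/-!
The conformal map is explicit. Let `w(s) = e^{-s²} erfc(-is)` be the Faddeeva function (`fad`). Then
`H z = z + log w(√z)` (`modelMap`).

On the closed upper half-plane `w` has positive real part, since there it is the Cauchy transform of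
a Gaussian (`fad_re_im`), so the logarithm makes sense. The identity `e^{H z} = erfc(-i√z)` shows
that the positive axis is sent to the curve `e^x cos y = 1` (`fad_real_re`), the negative axis to the
real line, and the upper half-plane into `Ω*` (`modelMap_mapsTo`). The asymptotics
`w(s) ~ i/(√π s)` give `H z / z → 1`.

Bijectivity of the explicit map is not needed to identify it with the given `H`: the holomorphic
self-map `φ = H⁻¹ ∘ modelMap` of the upper half-plane satisfies `φ z - z = o(|z|)` and has real
boundary values, so by a Phragmén–Lindelöf argument (`eq_add_const_of_boundary`) it is a real
translation, and the normalization at `0` makes it the identity (`eq_modelMap`).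

For the integral, `Im H t = arg w(√t)` for `t > 0`. Put `t = e^x`. Cauchy's theorem for `log w` on a
quarter annulus in the first quadrant, where `w` is real on the imaginary axis, gives
`∫_a^b arg w(e^{x/2}) dx = J a - J b` (`integral_argExp`), where `J x` is the integral over
`0 ≤ θ ≤ π` of `log |w|` at `e^{(x + iθ)/2}`. Since `w 0 = 1`, `J → 0` at `-∞`, and since
`|w(s)| ~ 1/(√π |s|)`, `J x + πx/2 → -π log √π` at `+∞`. Subtracting `π/2` for `x ≥ log 2` gives
`π log √π + (π/2) log 2 = (π/2) log (2π)` (`integral_modelMap`).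
-/

open Filter Set

/-- The open upper half-plane. -/
def UHP : Set ℂ := {z | 0 < z.im}

/-- The region `Ω*`, the part of the upper half-plane above the curve
`{t + i arccos(e^{-t}) : t ≥ 0}`. -/
noncomputable def Ωstar : Set ℂ :=
  {z | 0 < z.im ∧ (z.re ≤ 0 ∨ Real.arccos (Real.exp (-z.re)) < z.im)}

section

open MeasureTheory Topology

/-! ### The function `fad` -/

/-- The integrand of `fad`. -/
noncomputable def fadKer (s : ℂ) (v : ℝ) : ℂ :=
  Complex.exp (-(v : ℂ) ^ 2 + 2 * Complex.I * s * v)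

/-- The Faddeeva function `e^{-s²} erfc(-is)`, written as a half-line Gaussian integral which converges
for every complex `s` and makes `fad` entire. -/
noncomputable def fad (s : ℂ) : ℂ := ((2 / √Real.pi : ℝ) : ℂ) * ∫ v in Ioi (0 : ℝ), fadKer s v

lemma norm_fadKer (s : ℂ) (v : ℝ) : ‖fadKer s v‖ = Real.exp (-v ^ 2 - 2 * s.im * v) := by
  rw [fadKer, Complex.norm_exp]
  congr 1
  simp [pow_two]
  ring

lemma continuous_fadKer (s : ℂ) : Continuous (fadKer s) := by
  unfold fadKer; fun_prop

lemma integrable_exp_quad (c : ℝ) : Integrable (fun v : ℝ => Real.exp (-v ^ 2 + c * v)) := by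
  have h := (integrable_cexp_quadratic (b := 1) (by simp) (c : ℂ) 0).norm
  refine h.congr (Eventually.of_forall fun v => ?_)
  simp only [Complex.norm_exp]
  congr 1
  simp [pow_two]

lemma integrableOn_pow_exp_quad (k : ℕ) (c : ℝ) :
    IntegrableOn (fun v : ℝ => v ^ k * Real.exp (-v ^ 2 + c * v)) (Ioi 0) := by
  refine Integrable.mono' (((integrable_exp_quad (c + 1)).const_mul (k.factorial : ℝ)).integrableOn)
    (by fun_prop) ?_
  filter_upwards [ae_restrict_mem measurableSet_Ioi] with v hv
  have hv0 : (0 : ℝ) < v := hv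
  have h1 : v ^ k ≤ k.factorial * Real.exp v := by
    have := Real.pow_div_factorial_le_exp v hv0.le k
    rwa [div_le_iff₀ (by positivity), mul_comm] at this
  have h2 : Real.exp (-v ^ 2 + (c + 1) * v) = Real.exp v * Real.exp (-v ^ 2 + c * v) := by
    rw [← Real.exp_add]; congr 1; ring
  rw [Real.norm_of_nonneg (by positivity), h2, ← mul_assoc]
  gcongr

lemma integrableOn_pow_fadKer (k : ℕ) (s : ℂ) :
    IntegrableOn (fun v : ℝ => (v : ℂ) ^ k * fadKer s v) (Ioi 0) := by
  refine Integrable.mono' (integrableOn_pow_exp_quad k (-2 * s.im))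
    (Continuous.aestronglyMeasurable ((by fun_prop : Continuous fun v : ℝ => (v : ℂ) ^ k).mul
      (continuous_fadKer s))) ?_
  filter_upwards [ae_restrict_mem measurableSet_Ioi] with v hv
  have hv0 : (0 : ℝ) < v := hv
  rw [norm_mul, norm_fadKer, norm_pow, Complex.norm_real, Real.norm_of_nonneg hv0.le]
  apply le_of_eq; congr 2; ring

lemma integrableOn_fadKer (s : ℂ) : IntegrableOn (fadKer s) (Ioi 0) := by
  simpa using integrableOn_pow_fadKer 0 s

lemma integrableOn_mul_fadKer (s : ℂ) :
    IntegrableOn (fun v : ℝ => (v : ℂ) * fadKer s v) (Ioi 0) := by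
  simpa using integrableOn_pow_fadKer 1 s

lemma tendsto_pow_fadKer (k : ℕ) (s : ℂ) :
    Tendsto (fun v : ℝ => (v : ℂ) ^ k * fadKer s v) atTop (𝓝 0) := by
  set c : ℝ := -2 * s.im + 1
  have h0 : Tendsto (fun v : ℝ => (k.factorial : ℝ) * Real.exp (c + 1 - v)) atTop (𝓝 ((k.factorial : ℝ) * 0)) := by
    refine Tendsto.const_mul _ (Real.tendsto_exp_atBot.comp ?_)
    exact tendsto_atBot_add_const_left _ _ tendsto_neg_atTop_atBot
  rw [mul_zero] at h0
  have h1 : Tendsto (fun v : ℝ => (k.factorial : ℝ) * Real.exp (-v ^ 2 + c * v)) atTop (𝓝 0) := by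
    refine squeeze_zero' (Eventually.of_forall fun v => by positivity) ?_ h0
    filter_upwards [eventually_ge_atTop (|c| + 1)] with v hv
    have : -v ^ 2 + c * v ≤ c + 1 - v := by
      nlinarith [abs_nonneg c, le_abs_self c, neg_abs_le c]
    gcongr
  refine squeeze_zero_norm' ?_ h1
  filter_upwards [eventually_gt_atTop 0] with v hv0
  have h1 : v ^ k ≤ k.factorial * Real.exp v := by
    have := Real.pow_div_factorial_le_exp v hv0.le k
    rwa [div_le_iff₀ (by positivity), mul_comm] at this
  have h2 : Real.exp (-v ^ 2 + c * v) = Real.exp v * Real.exp (-v ^ 2 - 2 * s.im * v) := by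
    rw [← Real.exp_add]; congr 1; simp only [c]; ring
  rw [norm_mul, norm_fadKer, norm_pow, Complex.norm_real, Real.norm_of_nonneg hv0.le, h2,
    ← mul_assoc]
  gcongr

lemma hasDerivAt_fadKer_right (s : ℂ) (v : ℝ) :
    HasDerivAt (fadKer s) ((-2 * v + 2 * Complex.I * s) * fadKer s v) v := by
  have h : HasDerivAt (fun v : ℂ => Complex.exp (-v ^ 2 + 2 * Complex.I * s * v))
      ((-2 * v + 2 * Complex.I * s) * fadKer s v) (v : ℂ) := by
    have := (((hasDerivAt_id (v : ℂ)).pow 2).neg.add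
      ((hasDerivAt_id (v : ℂ)).const_mul (2 * Complex.I * s))).cexp
    convert! this using 1
    simp [fadKer]; ring
  exact h.comp_ofReal

lemma hasDerivAt_fadKer_left (s : ℂ) (v : ℝ) :
    HasDerivAt (fun s => fadKer s v) (2 * Complex.I * (v * fadKer s v)) s := by
  have := (((hasDerivAt_id s).const_mul (2 * Complex.I)).mul_const (v : ℂ)).const_add
    (-(v : ℂ) ^ 2) |>.cexp
  convert! this using 1
  simp [fadKer]; ring

/-- The integral over `(0, ∞)` of the `v`-derivative of the kernel is minus its value at `v = 0`. -/
lemma integral_fadKer_deriv (s : ℂ) :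
    -2 * (∫ v in Ioi (0 : ℝ), (v : ℂ) * fadKer s v) +
      2 * Complex.I * s * ∫ v in Ioi (0 : ℝ), fadKer s v = -1 := by
  have h := integral_Ioi_of_hasDerivAt_of_tendsto' (a := 0) (m := 0)
    (fun v _ => hasDerivAt_fadKer_right s v) (by
      have := ((integrableOn_mul_fadKer s).const_mul (-2)).add
        ((integrableOn_fadKer s).const_mul (2 * Complex.I * s))
      refine this.congr (Eventually.of_forall fun v => ?_)
      simp; ring) (by simpa using tendsto_pow_fadKer 0 s)
  have h0 : fadKer s 0 = 1 := by simp [fadKer]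
  rw [h0, zero_sub] at h
  rw [← h, ← integral_const_mul, ← integral_const_mul, ← integral_add
    ((integrableOn_mul_fadKer s).const_mul (-2)) ((integrableOn_fadKer s).const_mul _)]
  congr 1; ext v; ring

lemma hasDerivAt_fad (s : ℂ) :
    HasDerivAt fad (((2 / √Real.pi : ℝ) : ℂ) *
      (2 * Complex.I * ∫ v in Ioi (0 : ℝ), (v : ℂ) * fadKer s v)) s := by
  rw [← integral_const_mul]
  refine HasDerivAt.const_mul _ ?_
  refine (hasDerivAt_integral_of_dominated_loc_of_deriv_le
    (F' := fun x v => 2 * Complex.I * (v * fadKer x v)) (bound := fun v => 2 * (v ^ 1 * Real.exp (-v ^ 2 + (-2 * s.im + 2) * v)))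
    (Metric.ball_mem_nhds s one_pos)
    (Eventually.of_forall fun x => (continuous_fadKer x).aestronglyMeasurable)
    (integrableOn_fadKer s) ?_ ?_ ((integrableOn_pow_exp_quad 1 _).const_mul _) ?_).2
  · exact ((integrableOn_mul_fadKer s).const_mul _).aestronglyMeasurable
  · filter_upwards [ae_restrict_mem measurableSet_Ioi] with v hv x hx
    have hv0 : (0 : ℝ) < v := hv
    have hx' : s.im - x.im ≤ 1 := by
      have h1 := Complex.abs_im_le_norm (x - s)
      rw [mem_ball_iff_norm] at hx
      have h2 := abs_le.1 (h1.trans hx.le)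
      simp at h2; linarith [h2.1]
    simp only [norm_mul, norm_fadKer, Complex.norm_real, Complex.norm_I, Complex.norm_ofNat,
      Real.norm_of_nonneg hv0.le, pow_one, mul_one]
    gcongr
    nlinarith
  · exact Eventually.of_forall fun v x _ => hasDerivAt_fadKer_left x v

/-- The differential equation `w' = -2sw + 2i/√π` of the Faddeeva function. -/
lemma fad_ode (s : ℂ) :
    HasDerivAt fad (-2 * s * fad s + 2 * Complex.I / (√Real.pi : ℝ)) s := by
  convert hasDerivAt_fad s using 1
  have h := integral_fadKer_deriv s
  have hp : ((√Real.pi : ℝ) : ℂ) ≠ 0 := by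
    exact_mod_cast (Real.sqrt_pos.2 Real.pi_pos).ne'
  unfold fad
  push_cast
  field_simp
  linear_combination Complex.I * h - (2 * s * ∫ v in Ioi (0 : ℝ), fadKer s v) * Complex.I_sq

lemma differentiable_fad : Differentiable ℂ fad := fun s => (fad_ode s).differentiableAt

lemma fad_zero : fad 0 = 1 := by
  have h := integral_gaussian_Ioi 1
  have h2 : ∫ v in Ioi (0 : ℝ), fadKer 0 v = ((√Real.pi / 2 : ℝ) : ℂ) := by
    rw [div_one] at h
    rw [← h, ← integral_complex_ofReal]
    congr 1; ext v; simp [fadKer]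
  have hp : ((√Real.pi : ℝ) : ℂ) ≠ 0 := by
    exact_mod_cast (Real.sqrt_pos.2 Real.pi_pos).ne'
  rw [fad, h2]; push_cast; field_simp

/-- The function `e^{s²} fad s` is `erfc(-is)`: its derivative is a multiple of `e^{s²}`. -/
lemma hasDerivAt_exp_mul_fad (s : ℂ) :
    HasDerivAt (fun s => Complex.exp (s ^ 2) * fad s)
      (2 * Complex.I / (√Real.pi : ℝ) * Complex.exp (s ^ 2)) s := by
  have h := ((hasDerivAt_id s).pow 2).cexp.mul (fad_ode s)
  convert! h using 1
  simp; ring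

/-- On the real axis the derivative of `e^{s²} fad s` is purely imaginary, so its real part stays
equal to `1`. This makes the positive real axis go to the curved side of `Ω*`. -/
lemma fad_real_re (a : ℝ) : (fad a).re = Real.exp (-a ^ 2) := by
  have hd : ∀ a : ℝ, HasDerivAt (fun a : ℝ => (Complex.exp ((a : ℂ) ^ 2) * fad a).re) 0 a := by
    intro a
    have h := (hasDerivAt_exp_mul_fad (a : ℂ)).real_of_complex
    convert! h using 1
    have : 2 * Complex.I / ((√Real.pi : ℝ) : ℂ) * Complex.exp ((a : ℂ) ^ 2) =
      ((2 / √Real.pi * Real.exp (a ^ 2) : ℝ) : ℂ) * Complex.I := by push_cast; ring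
    rw [this, Complex.re_ofReal_mul]; simp
  have hc := is_const_of_deriv_eq_zero (fun a => (hd a).differentiableAt) (fun a => (hd a).deriv) a 0
  simp only [Complex.ofReal_zero, fad_zero] at hc
  have : Complex.exp ((a : ℂ) ^ 2) = ((Real.exp (a ^ 2) : ℝ) : ℂ) := by push_cast; rfl
  rw [this, Complex.re_ofReal_mul] at hc
  simp at hc
  rw [Real.exp_neg]
  field_simp
  linarith

/-- Along a vertical segment starting at the real point `a`, the real part of `e^{s²} fad s` decreases
strictly from `1` while the angle `2ab` of `e^{s²}` is below `π/2`. -/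
lemma exp_mul_fad_re_lt {a b : ℝ} (hb : 0 < b) (ha : 0 ≤ a) (hab : 2 * a * b < Real.pi / 2) :
    (Complex.exp ((a + b * Complex.I : ℂ) ^ 2) * fad (a + b * Complex.I)).re < 1 := by
  set g : ℝ → ℝ := fun y => (Complex.exp ((a + y * Complex.I : ℂ) ^ 2) * fad (a + y * Complex.I)).re
  have hd : ∀ y : ℝ, HasDerivAt g
      (-(2 / √Real.pi * (Real.exp (a ^ 2 - y ^ 2) * Real.cos (2 * a * y)))) y := by
    intro y
    have h1 : HasDerivAt (fun y : ℂ => (a : ℂ) + y * Complex.I) Complex.I (y : ℂ) := by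
      simpa using ((hasDerivAt_id (y : ℂ)).mul_const Complex.I).const_add (a : ℂ)
    have h := ((hasDerivAt_exp_mul_fad (a + y * Complex.I)).comp (y : ℂ) h1).real_of_complex
    convert! h using 1
    have : 2 * Complex.I / ((√Real.pi : ℝ) : ℂ) * Complex.exp ((a + y * Complex.I : ℂ) ^ 2)
        * Complex.I = ((-(2 / √Real.pi) : ℝ) : ℂ) *
          Complex.exp (((a ^ 2 - y ^ 2 : ℝ) : ℂ) + ((2 * a * y : ℝ) : ℂ) * Complex.I) := by
      have : (a + y * Complex.I : ℂ) ^ 2 = ((a ^ 2 - y ^ 2 : ℝ) : ℂ) + ((2 * a * y : ℝ) : ℂ) * Complex.I := by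
        push_cast
        linear_combination (y : ℂ) ^ 2 * Complex.I_sq
      rw [this]
      push_cast
      linear_combination (2 / ((√Real.pi : ℝ) : ℂ) * Complex.exp ((a : ℂ) ^ 2 - (y : ℂ) ^ 2 + 2 * (a : ℂ) * (y : ℂ) * Complex.I)) * Complex.I_sq
    rw [this, Complex.re_ofReal_mul, Complex.exp_re]
    simp [-Complex.ofReal_sub, -Complex.ofReal_mul, -Complex.ofReal_pow]
  have hanti : StrictAntiOn g (Icc 0 b) := by
    refine strictAntiOn_of_deriv_neg (convex_Icc _ _)
      (fun y _ => (hd y).continuousAt.continuousWithinAt) fun y hy => ?_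
    rw [interior_Icc] at hy
    rw [(hd y).deriv]
    have hc : 0 < Real.cos (2 * a * y) := by
      apply Real.cos_pos_of_mem_Ioo
      have h1 : 0 ≤ 2 * a * y := by have := hy.1; positivity
      have h2 : 2 * a * y ≤ 2 * a * b := by have := hy.2; gcongr
      constructor <;> linarith [Real.pi_pos]
    have := Real.pi_pos
    have : 0 < √Real.pi := Real.sqrt_pos.2 this
    have : 0 < 2 / √Real.pi * (Real.exp (a ^ 2 - y ^ 2) * Real.cos (2 * a * y)) := by positivity
    linarith
  have h := hanti (left_mem_Icc.2 hb.le) (right_mem_Icc.2 hb.le) hb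
  have h0 : g 0 = 1 := by
    have := fad_real_re a
    have e : Complex.exp ((a : ℂ) ^ 2) = ((Real.exp (a ^ 2) : ℝ) : ℂ) := by push_cast; rfl
    simp only [g, Complex.ofReal_zero, zero_mul, add_zero]
    rw [e, Complex.re_ofReal_mul, this, ← Real.exp_add]; simp
  rw [h0] at h
  exact h

/-! ### The Cauchy transform representation and asymptotics of `fad` -/

lemma integrable_gauss : Integrable (fun t : ℝ => Real.exp (-t ^ 2)) := by
  simpa using integrable_exp_quad 0

/-- Writing the Gaussian `e^{-v²}` as a Fourier integral and exchanging the order of integration turns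
`fad` into the Cauchy transform of a Gaussian. -/
lemma integral_fadKer_eq (s : ℂ) (hs : 0 < s.im) :
    (√Real.pi : ℝ) * ∫ v in Ioi (0 : ℝ), fadKer s v =
      ∫ t : ℝ, (Complex.I / 2) * ((Real.exp (-t ^ 2) : ℝ) / (s + t)) := by
  set F : ℝ → ℝ → ℂ := fun v t => Complex.exp (2 * Complex.I * s * v) *
    (Complex.exp (Complex.I * (2 * v : ℂ) * t) * Complex.exp (-1 * (t : ℂ) ^ 2)) with hF
  -- integrating in `t` first gives the Gaussian kernel, in `v` first the Cauchy kernel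
  have h1 : ∀ v : ℝ, ∫ t : ℝ, F v t = (√Real.pi : ℝ) * fadKer s v := by
    intro v
    simp only [hF]
    rw [integral_const_mul, fourierIntegral_gaussian (by simp)]
    have : ((Real.pi : ℂ) / 1) ^ (1 / 2 : ℂ) = ((√Real.pi : ℝ) : ℂ) := by
      rw [div_one, Real.sqrt_eq_rpow, Complex.ofReal_cpow Real.pi_pos.le]; norm_num
    rw [this, fadKer, add_comm, Complex.exp_add]
    have : -(2 * (v : ℂ)) ^ 2 / (4 * 1) = -(v : ℂ) ^ 2 := by ring
    rw [this]; ring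
  have h2 : ∀ t : ℝ, ∫ v in Ioi (0 : ℝ), F v t =
      (Complex.I / 2) * ((Real.exp (-t ^ 2) : ℝ) / (s + t)) := by
    intro t
    have e : ∀ v : ℝ, F v t = Complex.exp (2 * Complex.I * (s + t) * v) *
        (Real.exp (-t ^ 2) : ℝ) := by
      intro v
      simp only [hF]
      push_cast
      rw [← mul_assoc, ← Complex.exp_add]
      congr 2 <;> ring
    have hne : s + t ≠ 0 := by
      intro h; have := congrArg Complex.im h; simp at this; linarith
    simp_rw [e]
    rw [integral_mul_const, integral_exp_mul_complex_Ioi (by simp [hs])]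
    simp only [Complex.ofReal_zero, mul_zero, Complex.exp_zero]
    field_simp
    linear_combination -Complex.I_sq
  have hval_int : Integrable (Function.uncurry F) ((volume.restrict (Ioi (0 : ℝ))).prod volume) := by
    have hv : IntegrableOn (fun v : ℝ => Real.exp ((-2 * s.im) * v)) (Ioi 0) :=
      integrableOn_exp_mul_Ioi (by linarith) 0
    have hp := Integrable.mul_prod (ν := volume) hv integrable_gauss
    refine hp.mono' (Continuous.aestronglyMeasurable (by simp only [hF]; fun_prop)) ?_
    refine Eventually.of_forall fun p => le_of_eq ?_
    simp only [Function.uncurry, hF, norm_mul, Complex.norm_exp]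
    simp [pow_two]
  rw [← integral_const_mul]
  simp_rw [← h1, ← h2]
  exact integral_integral_swap hval_int

lemma integrable_cauchy (s : ℂ) (hs : 0 < s.im) :
    Integrable (fun t : ℝ => (Complex.I / 2) * (((Real.exp (-t ^ 2) : ℝ) : ℂ) / (s + t))) := by
  have hne : ∀ t : ℝ, s + t ≠ 0 := by
    intro t h; have := congrArg Complex.im h; simp at this; linarith
  refine Integrable.const_mul ?_ _
  refine (integrable_gauss.div_const s.im).mono' (Continuous.aestronglyMeasurable ?_) ?_
  · exact Continuous.div (by fun_prop) (by fun_prop) hne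
  · refine Eventually.of_forall fun t => ?_
    rw [norm_div, Complex.norm_real, Real.norm_of_nonneg (Real.exp_pos _).le]
    gcongr
    have := Complex.im_le_norm (s + t)
    simpa using this

/-- Real and imaginary part of the Cauchy transform formula, together with integrability of the two
real kernels. -/
lemma fad_re_im (s : ℂ) (hs : 0 < s.im) :
    (fad s).re = (1 / Real.pi) * ∫ t : ℝ, Real.exp (-t ^ 2) * s.im / ((s.re + t) ^ 2 + s.im ^ 2) ∧
    (fad s).im = (1 / Real.pi) *
      ∫ t : ℝ, Real.exp (-t ^ 2) * (s.re + t) / ((s.re + t) ^ 2 + s.im ^ 2) ∧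
    Integrable (fun t : ℝ => Real.exp (-t ^ 2) * s.im / ((s.re + t) ^ 2 + s.im ^ 2)) ∧
    Integrable (fun t : ℝ => Real.exp (-t ^ 2) * (s.re + t) / ((s.re + t) ^ 2 + s.im ^ 2)) := by
  have hpi : 0 < √Real.pi := Real.sqrt_pos.2 Real.pi_pos
  have hpc : ((√Real.pi : ℝ) : ℂ) ≠ 0 := by exact_mod_cast hpi.ne'
  have hsq : ((√Real.pi : ℝ) : ℂ) * (√Real.pi : ℝ) = (Real.pi : ℝ) := by
    rw [← Complex.ofReal_mul, Real.mul_self_sqrt Real.pi_pos.le]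
  have hi := integrable_cauchy s hs
  set J : ℂ := ∫ t : ℝ, (Complex.I / 2) * (((Real.exp (-t ^ 2) : ℝ) : ℂ) / (s + t)) with hJ
  have h : fad s = ((2 / Real.pi : ℝ) : ℂ) * J := by
    have := integral_fadKer_eq s hs
    rw [← hJ] at this
    rw [← this, fad]
    push_cast
    rw [← hsq]
    field_simp
  have hre : ∀ t : ℝ, ((Complex.I / 2) * (((Real.exp (-t ^ 2) : ℝ) : ℂ) / (s + t))).re =
      (1 / 2) * (Real.exp (-t ^ 2) * s.im / ((s.re + t) ^ 2 + s.im ^ 2)) := by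
    intro t
    rw [div_mul_div_comm, mul_comm Complex.I, mul_div_assoc, Complex.re_ofReal_mul, Complex.div_re]
    have : 0 < (s.re + t) ^ 2 + s.im ^ 2 := by positivity
    simp [Complex.normSq_apply]
    field_simp
  have him : ∀ t : ℝ, ((Complex.I / 2) * (((Real.exp (-t ^ 2) : ℝ) : ℂ) / (s + t))).im =
      (1 / 2) * (Real.exp (-t ^ 2) * (s.re + t) / ((s.re + t) ^ 2 + s.im ^ 2)) := by
    intro t
    rw [div_mul_div_comm, mul_comm Complex.I, mul_div_assoc, Complex.im_ofReal_mul, Complex.div_im]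
    have : 0 < (s.re + t) ^ 2 + s.im ^ 2 := by positivity
    simp [Complex.normSq_apply]
    field_simp
  have hr := hi.re
  have hm := hi.im
  have hJr : J.re = (1 / 2) * ∫ t : ℝ, Real.exp (-t ^ 2) * s.im / ((s.re + t) ^ 2 + s.im ^ 2) := by
    rw [← integral_const_mul]
    simp_rw [← hre]
    exact (integral_re hi).symm
  have hJi : J.im = (1 / 2) *
      ∫ t : ℝ, Real.exp (-t ^ 2) * (s.re + t) / ((s.re + t) ^ 2 + s.im ^ 2) := by
    rw [← integral_const_mul]
    simp_rw [← him]
    exact (integral_im hi).symm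
  refine ⟨?_, ?_, ?_, ?_⟩
  · rw [h, Complex.re_ofReal_mul, hJr]; ring
  · rw [h, Complex.im_ofReal_mul, hJi]; ring
  · refine (hr.const_mul 2).congr (Eventually.of_forall fun t => ?_)
    have := hre t
    simp only [RCLike.re_to_complex]
    rw [this]; ring
  · refine (hm.const_mul 2).congr (Eventually.of_forall fun t => ?_)
    have := him t
    simp only [RCLike.im_to_complex]
    rw [this]; ring

lemma fad_re_pos_of_im_pos (s : ℂ) (hs : 0 < s.im) : 0 < (fad s).re := by
  obtain ⟨h, -, hi, -⟩ := fad_re_im s hs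
  rw [h]
  have hpos : ∀ t : ℝ, 0 < Real.exp (-t ^ 2) * s.im / ((s.re + t) ^ 2 + s.im ^ 2) := fun t => by
    positivity
  have : 0 < ∫ t : ℝ, Real.exp (-t ^ 2) * s.im / ((s.re + t) ^ 2 + s.im ^ 2) := by
    rw [integral_pos_iff_support_of_nonneg (fun t => (hpos t).le) hi]
    rw [show Function.support _ = univ from eq_univ_of_forall fun t => (hpos t).ne']
    simp
  have := Real.pi_pos
  positivity

/-- Pairing the points `x` and `-x` leaves a positive integrand, because the Gaussian is centred at
`s.re > 0`. -/
lemma fad_im_pos (s : ℂ) (hs : 0 < s.im) (hs' : 0 < s.re) : 0 < (fad s).im := by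
  obtain ⟨-, h, -, hi⟩ := fad_re_im s hs
  rw [h]
  set a := s.re
  set b := s.im
  -- the integrand of `fad_re_im` after the translation `x = a + t`
  set k : ℝ → ℝ := fun x => Real.exp (-(x - a) ^ 2) * x / (x ^ 2 + b ^ 2) with hk
  have hki : Integrable k := by
    refine (hi.comp_sub_right a).congr (Eventually.of_forall fun x => ?_)
    simp [hk]
  have e1 : ∫ t : ℝ, Real.exp (-t ^ 2) * (a + t) / ((a + t) ^ 2 + b ^ 2) = ∫ x, k x := by
    rw [← integral_sub_right_eq_self _ a]
    congr 1; ext x; simp [hk]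
  have e2 : ∫ x, k (-x) = ∫ x, k x := integral_neg_eq_self k volume
  have e3 : ∫ x, (k x + k (-x)) = 2 * ∫ x, k x := by
    rw [integral_add hki hki.comp_neg, e2]; ring
  have hform : ∀ x, k x + k (-x) =
      x * (Real.exp (-(x - a) ^ 2) - Real.exp (-(x + a) ^ 2)) / (x ^ 2 + b ^ 2) := by
    intro x
    simp only [hk]
    rw [show -(-x - a) ^ 2 = -(x + a) ^ 2 by ring, neg_sq]
    ring
  have hpos : ∀ x, 0 < x → 0 < k x + k (-x) := by
    intro x hx
    rw [hform]
    have : Real.exp (-(x + a) ^ 2) < Real.exp (-(x - a) ^ 2) := by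
      apply Real.exp_lt_exp.2; nlinarith [mul_pos hx hs']
    have := sub_pos.2 this
    positivity
  have hnn : ∀ x, 0 ≤ k x + k (-x) := by
    intro x
    rcases lt_trichotomy x 0 with hx | hx | hx
    · have := hpos (-x) (by linarith)
      rw [neg_neg] at this; linarith
    · simp [hx, hk]
    · exact (hpos x hx).le
  have : 0 < ∫ x, (k x + k (-x)) := by
    rw [integral_pos_iff_support_of_nonneg hnn (hki.add hki.comp_neg)]
    refine lt_of_lt_of_le ?_ (measure_mono (show Ioi (0 : ℝ) ⊆ _ from fun x hx => (hpos x hx).ne'))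
    simp
  rw [e1]
  have := Real.pi_pos
  have : 0 < ∫ x, k x := by linarith
  positivity

lemma fad_re_pos (s : ℂ) (hs : 0 ≤ s.im) : 0 < (fad s).re := by
  rcases hs.eq_or_lt with h | h
  · have : s = ((s.re : ℝ) : ℂ) := Complex.ext (by simp) (by simp [← h])
    rw [this, fad_real_re]; positivity
  · exact fad_re_pos_of_im_pos s h

lemma fad_im_nonneg (s : ℂ) (hs : 0 ≤ s.im) (hs' : 0 ≤ s.re) : 0 ≤ (fad s).im := by
  have hc : Continuous fun e : ℝ => (fad (s + e * (1 + Complex.I))).im :=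
    Complex.continuous_im.comp (differentiable_fad.continuous.comp (by fun_prop))
  have ht : Tendsto (fun e : ℝ => (fad (s + e * (1 + Complex.I))).im) (𝓝[>] 0) (𝓝 (fad s).im) := by
    have := (hc.tendsto 0).mono_left (nhdsWithin_le_nhds (s := Ioi 0))
    simpa using this
  refine ge_of_tendsto ht ?_
  filter_upwards [self_mem_nhdsWithin] with e he
  have he' : (0 : ℝ) < e := he
  apply le_of_lt
  apply fad_im_pos <;> simp <;> linarith

/-- On the imaginary axis the kernel of `fad` is real. -/
lemma fad_imag (y : ℝ) : (fad (y * Complex.I)).im = 0 := by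
  have : ∀ v : ℝ, fadKer (y * Complex.I) v = ((Real.exp (-v ^ 2 - 2 * y * v) : ℝ) : ℂ) := by
    intro v
    rw [fadKer, Complex.ofReal_exp]
    congr 1
    push_cast
    linear_combination (2 * (y : ℂ) * v) * Complex.I_sq
  rw [fad]
  simp_rw [this]
  rw [integral_complex_ofReal, ← Complex.ofReal_mul, Complex.ofReal_im]

/-- The asymptotics `fad s = i/(√π s) + O(|s|⁻²)`, uniformly on the closed upper half-plane, from two
integrations by parts. -/
lemma fad_asymp : ∃ C : ℝ, ∀ s : ℂ, 0 ≤ s.im →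
    ‖s‖ * ‖s * fad s - Complex.I / (√Real.pi : ℝ)‖ ≤ C := by
  have hpi : 0 < √Real.pi := Real.sqrt_pos.2 Real.pi_pos
  have hpc : ((√Real.pi : ℝ) : ℂ) ≠ 0 := by exact_mod_cast hpi.ne'
  set B : ℝ → ℝ := fun v => v ^ 0 * Real.exp (-v ^ 2 + 0 * v) +
    2 * (v ^ 2 * Real.exp (-v ^ 2 + 0 * v)) with hB
  have hBi : IntegrableOn B (Ioi 0) :=
    (integrableOn_pow_exp_quad 0 0).add ((integrableOn_pow_exp_quad 2 0).const_mul 2)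
  refine ⟨(1 / √Real.pi) * ∫ v in Ioi (0 : ℝ), B v, fun s hs => ?_⟩
  set K := ∫ v in Ioi (0 : ℝ), (v : ℂ) * fadKer s v with hK
  have h1 : s * fad s - Complex.I / (√Real.pi : ℝ) = -(2 * Complex.I / (√Real.pi : ℝ)) * K := by
    have := (fad_ode s).unique (hasDerivAt_fad s)
    rw [← hK] at this
    push_cast at this
    field_simp at this ⊢
    linear_combination -this
  set g : ℝ → ℂ := fun v => (v : ℂ) ^ 0 * fadKer s v - 2 * ((v : ℂ) ^ 2 * fadKer s v) +
    2 * Complex.I * s * (v * fadKer s v) with hg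
  have hi0 : IntegrableOn (fun v : ℝ => (v : ℂ) ^ 0 * fadKer s v - 2 * ((v : ℂ) ^ 2 * fadKer s v))
      (Ioi 0) := (integrableOn_pow_fadKer 0 s).sub ((integrableOn_pow_fadKer 2 s).const_mul 2)
  have hi1 : IntegrableOn (fun v : ℝ => 2 * Complex.I * s * (v * fadKer s v)) (Ioi 0) :=
    (integrableOn_mul_fadKer s).const_mul _
  -- `g` is the derivative of `v ↦ v * fadKer s v`, which vanishes at both ends
  have h2 : ∫ v in Ioi (0 : ℝ), g v = 0 := by
    have h := integral_Ioi_of_hasDerivAt_of_tendsto' (a := 0) (m := 0)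
      (f := fun v : ℝ => (v : ℂ) * fadKer s v) (f' := g) (fun v _ => by
        have := (Complex.ofRealCLM.hasDerivAt (x := v)).mul (hasDerivAt_fadKer_right s v)
        convert! this using 1
        simp [hg]; ring) (hi0.add hi1) (by simpa using tendsto_pow_fadKer 1 s)
    simpa using h
  have h3 : 2 * Complex.I * s * K =
      -∫ v in Ioi (0 : ℝ), ((v : ℂ) ^ 0 * fadKer s v - 2 * ((v : ℂ) ^ 2 * fadKer s v)) := by
    simp only [hg] at h2
    rw [integral_add hi0 hi1, integral_const_mul, ← hK] at h2
    linear_combination h2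
  have h4 : ‖2 * Complex.I * s * K‖ ≤ ∫ v in Ioi (0 : ℝ), B v := by
    rw [h3, norm_neg]
    refine norm_integral_le_of_norm_le hBi ?_
    filter_upwards [ae_restrict_mem measurableSet_Ioi] with v hv
    have hv0 : (0 : ℝ) < v := hv
    have hle : Real.exp (-v ^ 2 - 2 * s.im * v) ≤ Real.exp (-v ^ 2 + 0 * v) := by
      apply Real.exp_le_exp.2; nlinarith [mul_nonneg hs hv0.le]
    refine (norm_sub_le _ _).trans ?_
    simp only [norm_mul, norm_fadKer, norm_pow, Complex.norm_real, Real.norm_of_nonneg hv0.le, hB,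
      Complex.norm_ofNat]
    gcongr
  rw [h1]
  have : ‖s‖ * ‖-(2 * Complex.I / ((√Real.pi : ℝ) : ℂ)) * K‖ =
      (1 / √Real.pi) * ‖2 * Complex.I * s * K‖ := by
    simp only [norm_mul, norm_neg, norm_div, Complex.norm_real, Real.norm_of_nonneg hpi.le,
      Complex.norm_I, Complex.norm_ofNat]
    ring
  rw [this]
  gcongr

/-! ### The explicit conformal map -/

/-- The square root mapping the closed upper half-plane to the closed first quadrant, by an explicit
formula in real square roots. This formula is continuous on all of `ℂ`, but it is a square root of
`z` only when `0 ≤ z.im`. -/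
noncomputable def usqrt (z : ℂ) : ℂ := ⟨√((‖z‖ + z.re) / 2), √((‖z‖ - z.re) / 2)⟩

lemma continuous_usqrt : Continuous usqrt := by
  have h : usqrt = fun z : ℂ => ((√((‖z‖ + z.re) / 2) : ℝ) : ℂ) +
      ((√((‖z‖ - z.re) / 2) : ℝ) : ℂ) * Complex.I := by
    ext z; simp [usqrt, Complex.mk_eq_add_mul_I]
  rw [h]
  fun_prop

lemma usqrt_re_nonneg (z : ℂ) : 0 ≤ (usqrt z).re := Real.sqrt_nonneg _

lemma usqrt_im_nonneg (z : ℂ) : 0 ≤ (usqrt z).im := Real.sqrt_nonneg _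

lemma usqrt_sq (z : ℂ) (hz : 0 ≤ z.im) : usqrt z ^ 2 = z := by
  have h1 : 0 ≤ (‖z‖ + z.re) / 2 := by
    have := neg_le_of_abs_le (Complex.abs_re_le_norm z); linarith
  have h2 : 0 ≤ (‖z‖ - z.re) / 2 := by
    have := Complex.re_le_norm z; linarith
  have h3 : ‖z‖ ^ 2 = z.re ^ 2 + z.im ^ 2 := by
    rw [Complex.sq_norm, Complex.normSq_apply]; ring
  apply Complex.ext
  · simp only [pow_two, Complex.mul_re, usqrt, Real.mul_self_sqrt h1, Real.mul_self_sqrt h2]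
    ring
  · simp only [pow_two, Complex.mul_im, usqrt]
    rw [mul_comm, ← Real.sqrt_mul h2]
    have : (‖z‖ - z.re) / 2 * ((‖z‖ + z.re) / 2) = (z.im / 2) ^ 2 := by
      linear_combination h3 / 4
    rw [this, Real.sqrt_sq (by linarith)]
    ring

lemma norm_usqrt (z : ℂ) (hz : 0 ≤ z.im) : ‖usqrt z‖ ^ 2 = ‖z‖ := by
  rw [← norm_pow, usqrt_sq z hz]

lemma usqrt_pos {z : ℂ} (hz : 0 < z.im) : 0 < (usqrt z).re ∧ 0 < (usqrt z).im := by
  have h := congrArg Complex.im (usqrt_sq z hz.le)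
  simp only [pow_two, Complex.mul_im] at h
  have h1 := usqrt_re_nonneg z
  have h2 := usqrt_im_nonneg z
  constructor
  · rcases h1.eq_or_lt with h' | h'
    · rw [← h'] at h; linarith
    · exact h'
  · rcases h2.eq_or_lt with h' | h'
    · rw [← h'] at h; linarith
    · exact h'

lemma isOpen_UHP : IsOpen UHP := isOpen_lt continuous_const Complex.continuous_im

lemma mem_closure_UHP {z : ℂ} : z ∈ closure UHP ↔ 0 ≤ z.im := by
  rw [UHP, Complex.closure_setOfPred_lt_im]; rfl

lemma differentiableAt_usqrt {z : ℂ} (hz : 0 < z.im) : DifferentiableAt ℂ usqrt z := by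
  have hne : usqrt z ≠ 0 := by
    intro h; have := (usqrt_pos hz).1; rw [h] at this; simp at this
  refine (HasDerivAt.of_local_left_inverse (f := fun s : ℂ => s ^ 2) (f' := 2 * usqrt z)
    continuous_usqrt.continuousAt ?_ (by simpa using hne) ?_).differentiableAt
  · simpa using hasDerivAt_pow 2 (usqrt z)
  · filter_upwards [isOpen_UHP.mem_nhds hz] with y hy
    exact usqrt_sq y (le_of_lt hy)

/-- The explicit conformal map `z ↦ z + log w(√z)` of the upper half-plane into `Ω*`, where `w` is
the Faddeeva function `fad`. The principal logarithm is the right one since `fad` has positive real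
part on the closed upper half-plane. -/
noncomputable def modelMap (z : ℂ) : ℂ := z + Complex.log (fad (usqrt z))

lemma fad_ne_zero {s : ℂ} (hs : 0 ≤ s.im) : fad s ≠ 0 := by
  intro h; have := fad_re_pos s hs; rw [h] at this; simp at this

lemma exp_modelMap {z : ℂ} (hz : 0 ≤ z.im) :
    Complex.exp (modelMap z) = Complex.exp (usqrt z ^ 2) * fad (usqrt z) := by
  rw [modelMap, Complex.exp_add, Complex.exp_log (fad_ne_zero (usqrt_im_nonneg z)), usqrt_sq z hz]

lemma continuous_modelMap : Continuous modelMap := by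
  refine continuous_id.add (continuous_iff_continuousAt.2 fun z => ?_)
  exact (differentiable_fad.continuous.comp continuous_usqrt).continuousAt.clog
    (Or.inl (fad_re_pos _ (usqrt_im_nonneg z)))

lemma differentiableOn_modelMap : DifferentiableOn ℂ modelMap UHP := by
  intro z hz
  refine (differentiableAt_id.add (DifferentiableAt.clog ?_ ?_)).differentiableWithinAt
  · exact (differentiable_fad _).comp z (differentiableAt_usqrt hz)
  · exact Or.inl (fad_re_pos _ (usqrt_im_nonneg z))

lemma modelMap_im (z : ℂ) : (modelMap z).im = z.im + (fad (usqrt z)).arg := by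
  simp [modelMap, Complex.log_im]

lemma arg_fad_nonneg (z : ℂ) : 0 ≤ (fad (usqrt z)).arg :=
  Complex.arg_nonneg_iff.2 (fad_im_nonneg _ (usqrt_im_nonneg z) (usqrt_re_nonneg z))

lemma arg_fad_lt (z : ℂ) : (fad (usqrt z)).arg < Real.pi / 2 :=
  Complex.arg_lt_pi_div_two_iff.2 (Or.inl (fad_re_pos _ (usqrt_im_nonneg z)))

/-- If `Im modelMap z < π/2`, the inequality `Re e^{s²} fad s < 1` with `s = √z` says precisely that
`modelMap z` lies above the curve bounding `Ω*`. -/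
lemma modelMap_mapsTo : MapsTo modelMap UHP Ωstar := by
  intro z hz
  have hz' : 0 < z.im := hz
  have him := modelMap_im z
  have ha := arg_fad_nonneg z
  refine ⟨by linarith, ?_⟩
  by_cases hre : (modelMap z).re ≤ 0
  · exact Or.inl hre
  right
  push Not at hre
  by_cases hY : Real.pi / 2 ≤ (modelMap z).im
  · exact lt_of_lt_of_le (Real.arccos_lt_pi_div_two.2 (Real.exp_pos _)) hY
  push Not at hY
  obtain ⟨h1, h2⟩ := usqrt_pos hz'
  have hs := congrArg Complex.im (usqrt_sq z hz'.le)
  simp only [pow_two, Complex.mul_im] at hs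
  have h3 := exp_mul_fad_re_lt h2 h1.le (by linarith)
  rw [Complex.re_add_im, ← exp_modelMap hz'.le, Complex.exp_re] at h3
  have h4 : Real.cos (modelMap z).im < Real.exp (-(modelMap z).re) := by
    rw [Real.exp_neg, ← one_div, lt_div_iff₀' (Real.exp_pos _)]
    exact h3
  calc Real.arccos (Real.exp (-(modelMap z).re)) < Real.arccos (Real.cos (modelMap z).im) :=
        Real.arccos_lt_arccos (Real.neg_one_le_cos _) h4 (by simpa using hre.le)
    _ = (modelMap z).im := Real.arccos_cos (by linarith) (by linarith [Real.pi_pos])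

lemma usqrt_ofReal_pos {x : ℝ} (hx : 0 ≤ x) : usqrt x = (√x : ℝ) := by
  apply Complex.ext <;> simp [usqrt, abs_of_nonneg hx]

lemma usqrt_ofReal_neg {x : ℝ} (hx : x ≤ 0) : usqrt x = (√(-x) : ℝ) * Complex.I := by
  have h : (-x - x) / 2 = -x := by ring
  apply Complex.ext
  · simp [usqrt, abs_of_nonpos hx]
  · simp only [usqrt, Complex.norm_real, Real.norm_eq_abs, abs_of_nonpos hx, Complex.ofReal_re, h]
    simp

/-- The negative axis is sent to the real line and the positive one to the curve
`e^{Re w} cos (Im w) = 1`, neither of which meets `Ω*`. -/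
lemma modelMap_real_notMem (x : ℝ) : modelMap x ∉ Ωstar := by
  have him := modelMap_im x
  rw [Complex.ofReal_im, zero_add] at him
  rintro ⟨h1, h2⟩
  rcases le_or_gt x 0 with hx | hx
  · rw [usqrt_ofReal_neg hx, Complex.arg_eq_zero_iff.2] at him
    · linarith
    · exact ⟨(fad_re_pos _ (by simp)).le, fad_imag _⟩
  have hY := arg_fad_lt x
  rw [← him] at hY
  have hre : Real.exp (modelMap x).re * Real.cos (modelMap x).im = 1 := by
    rw [← Complex.exp_re, exp_modelMap (by simp), usqrt_ofReal_pos hx.le]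
    have e : Complex.exp (((√x : ℝ) : ℂ) ^ 2) = ((Real.exp (√x ^ 2) : ℝ) : ℂ) := by push_cast; rfl
    rw [e, Complex.re_ofReal_mul, fad_real_re, ← Real.exp_add]; simp
  have hcos : Real.cos (modelMap x).im = Real.exp (-(modelMap x).re) := by
    rw [Real.exp_neg]; exact eq_inv_of_mul_eq_one_right hre
  rcases h2 with h2 | h2
  · have : 1 ≤ Real.exp (-(modelMap x).re) := by simpa using h2
    have h3 : Real.cos (modelMap x).im < Real.cos 0 :=
      Real.cos_lt_cos_of_nonneg_of_le_pi le_rfl (by linarith [Real.pi_pos]) h1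
    rw [Real.cos_zero] at h3
    linarith
  · rw [← hcos, Real.arccos_cos h1.le (by linarith [Real.pi_pos])] at h2
    exact lt_irrefl _ h2

lemma fad_real_im_pos {a : ℝ} (ha : 0 < a) : 0 < (fad a).im := by
  have hpi : 0 < √Real.pi := Real.sqrt_pos.2 Real.pi_pos
  have e : ∀ a : ℝ, Complex.exp ((a : ℂ) ^ 2) = ((Real.exp (a ^ 2) : ℝ) : ℂ) := by
    intro a; push_cast; rfl
  have hd : ∀ a : ℝ, HasDerivAt (fun a : ℝ => Real.exp (a ^ 2) * (fad a).im)
      (2 / √Real.pi * Real.exp (a ^ 2)) a := by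
    intro a
    have h := ((hasDerivAt_exp_mul_fad (a : ℂ)).const_mul (-Complex.I)).real_of_complex
    convert! h using 1
    · ext a; rw [e, mul_left_comm, Complex.re_ofReal_mul]; simp
    · have : -Complex.I * (2 * Complex.I / ((√Real.pi : ℝ) : ℂ) * Complex.exp ((a : ℂ) ^ 2)) =
        ((2 / √Real.pi * Real.exp (a ^ 2) : ℝ) : ℂ) := by
        rw [e]; push_cast
        linear_combination (-(2 / ((√Real.pi : ℝ) : ℂ) * Complex.exp ((a : ℂ) ^ 2))) * Complex.I_sq
      rw [this, Complex.ofReal_re]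
  have hm : StrictMono (fun a : ℝ => Real.exp (a ^ 2) * (fad a).im) :=
    strictMono_of_deriv_pos fun a => by rw [(hd a).deriv]; positivity
  have h := hm ha
  simp only [Complex.ofReal_zero, fad_zero, Complex.one_im, mul_zero] at h
  exact pos_of_mul_pos_right h (Real.exp_pos _).le

lemma modelMap_real_eq_zero {x : ℝ} (h : modelMap x = 0) : x = 0 := by
  have he := exp_modelMap (z := x) (by simp)
  rw [h, Complex.exp_zero] at he
  rcases lt_trichotomy x 0 with hx | hx | hx
  · exfalso
    rw [usqrt_ofReal_neg hx.le] at he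
    -- for `x < 0` the real number `e^{s²} fad s` with `s = i √(-x)` is less than `1`
    have := exp_mul_fad_re_lt (a := 0) (b := √(-x)) (Real.sqrt_pos.2 (by linarith)) le_rfl
      (by simp; positivity)
    rw [Complex.ofReal_zero, zero_add, ← he] at this
    simp at this
  · exact hx
  · exfalso
    have := modelMap_im x
    rw [h, Complex.ofReal_im, zero_add, Complex.zero_im] at this
    have h1 := (Complex.arg_eq_zero_iff.1 this.symm).2
    rw [usqrt_ofReal_pos hx.le] at h1
    have := fad_real_im_pos (Real.sqrt_pos.2 hx)
    linarith

/-- The logarithmic form of the asymptotics: `log |fad s| + log |s| + log √π → 0` as `|s| → ∞` in the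
closed upper half-plane. -/
lemma tendsto_norm_mul_fad :
    ∀ ε > 0, ∃ R : ℝ, 1 ≤ R ∧ ∀ s : ℂ, 0 ≤ s.im → R ≤ ‖s‖ →
      |Real.log ‖fad s‖ + Real.log ‖s‖ + Real.log (√Real.pi)| ≤ ε := by
  intro ε hε
  have hpi : 0 < √Real.pi := Real.sqrt_pos.2 Real.pi_pos
  obtain ⟨C, hC⟩ := fad_asymp
  have hcont : ContinuousAt Real.log (1 / √Real.pi) := Real.continuousAt_log (by positivity)
  obtain ⟨δ, hδ, h⟩ := Metric.continuousAt_iff.1 hcont ε hε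
  refine ⟨max 1 ((|C| + 1) / δ), le_max_left _ _, fun s hs hR => ?_⟩
  have hs1 : 1 ≤ ‖s‖ := (le_max_left _ _).trans hR
  have hs2 : (|C| + 1) / δ ≤ ‖s‖ := (le_max_right _ _).trans hR
  have h1 : ‖s * fad s - Complex.I / (√Real.pi : ℝ)‖ < δ := by
    rw [div_le_iff₀ hδ] at hs2
    have := hC s hs
    have h2 := le_abs_self C
    by_contra hcon
    push Not at hcon
    nlinarith
  have h2 : ‖(Complex.I / (√Real.pi : ℝ) : ℂ)‖ = 1 / √Real.pi := by
    rw [norm_div, Complex.norm_I, Complex.norm_real, Real.norm_of_nonneg hpi.le]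
  have h3 : dist ‖s * fad s‖ (1 / √Real.pi) < δ := by
    rw [← h2, Real.dist_eq]
    exact (abs_norm_sub_norm_le _ _).trans_lt h1
  have h4 := (h h3).le
  have hf : ‖fad s‖ ≠ 0 := norm_ne_zero_iff.2 (fad_ne_zero hs)
  rw [Real.dist_eq, norm_mul, Real.log_mul (by linarith) hf, Real.log_div one_ne_zero hpi.ne',
    Real.log_one] at h4
  rwa [show Real.log ‖fad s‖ + Real.log ‖s‖ + Real.log (√Real.pi) =
    Real.log ‖s‖ + Real.log ‖fad s‖ - (0 - Real.log (√Real.pi)) by ring]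

lemma modelMap_growth : ∀ ε > 0, ∃ R : ℝ, ∀ z : ℂ, 0 ≤ z.im → R ≤ ‖z‖ →
    ‖modelMap z - z‖ ≤ ε * ‖z‖ := by
  intro ε hε
  obtain ⟨R, hR1, hR⟩ := tendsto_norm_mul_fad 1 one_pos
  set K : ℝ := 1 + |Real.log (√Real.pi)| + Real.pi with hK
  have hK0 : 0 < K := by positivity
  set T := max R ((K + 1) / ε) with hT
  refine ⟨T ^ 2, fun z hz hzR => ?_⟩
  set s := usqrt z with hs
  have hn : ‖s‖ ^ 2 = ‖z‖ := norm_usqrt z hz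
  have hT1 : 1 ≤ T := hR1.trans (le_max_left _ _)
  have hsT : T ≤ ‖s‖ := by
    rw [← hn] at hzR
    exact le_of_sq_le_sq hzR (norm_nonneg _)
  have h1 := hR s (usqrt_im_nonneg z) ((le_max_left _ _).trans hsT)
  have h2 : (K + 1) / ε ≤ ‖s‖ := (le_max_right _ _).trans hsT
  have hs1 : 1 ≤ ‖s‖ := hT1.trans hsT
  have h3 : modelMap z - z = Complex.log (fad s) := by simp [modelMap, hs]
  rw [h3]
  have h4 : ‖Complex.log (fad s)‖ ≤ |Real.log ‖fad s‖| + Real.pi := by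
    refine (Complex.norm_le_abs_re_add_abs_im _).trans ?_
    rw [Complex.log_re, Complex.log_im]
    gcongr
    exact Complex.abs_arg_le_pi _
  have h5 : |Real.log ‖fad s‖| ≤ ‖s‖ + 1 + |Real.log (√Real.pi)| := by
    have l1 : Real.log ‖s‖ ≤ ‖s‖ := (Real.log_le_sub_one_of_pos (by linarith)).trans (by linarith)
    have l2 : 0 ≤ Real.log ‖s‖ := Real.log_nonneg hs1
    have := abs_le.1 h1
    have e1 := le_abs_self (Real.log (√Real.pi))
    have e2 := neg_abs_le (Real.log (√Real.pi))
    rw [abs_le]; constructor <;> linarith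
  rw [div_le_iff₀ hε] at h2
  rw [← hn]
  nlinarith

/-! ### A maximum principle in the upper half-plane, and inverse functions -/

/-- The maximum principle on a bounded domain for a function that need not extend continuously to the
boundary: it is enough that its modulus has upper limit at most `1` at every boundary point. -/
lemma norm_le_one_of_boundary {U : Set ℂ} (hUo : IsOpen U) (hUc : IsPreconnected U)
    (hUb : Bornology.IsBounded U) {f : ℂ → ℂ} (hf : DifferentiableOn ℂ f U)
    (hbd : ∀ x ∈ closure U, x ∉ U → ∀ M > (1 : ℝ), ∀ᶠ z in 𝓝[U] x, ‖f z‖ ≤ M)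
    {x₀ : ℂ} (hx₀ : x₀ ∈ closure U) (hx₀' : x₀ ∉ U) : ∀ z ∈ U, ‖f z‖ ≤ 1 := by
  intro z₁ hz₁
  by_contra hcon
  push Not at hcon
  set M₁ := ‖f z₁‖ with hM₁
  have hmid : (1 + M₁) / 2 > 1 := by linarith
  set K : Set ℂ := {z | z ∈ U ∧ M₁ ≤ ‖f z‖} with hK
  have hKU : K ⊆ U := fun z hz => hz.1
  have hKclosed : IsClosed K := by
    refine isClosed_of_closure_subset fun z hz => ?_
    have hfr : ∃ᶠ y in 𝓝 z, y ∈ K := mem_closure_iff_frequently.1 hz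
    by_cases hzU : z ∈ U
    · refine ⟨hzU, ?_⟩
      by_contra hlt
      push Not at hlt
      have hcz : ContinuousAt (fun y => ‖f y‖) z :=
        (hf.differentiableAt (hUo.mem_nhds hzU)).continuousAt.norm
      obtain ⟨y, hy1, hy2⟩ := (hfr.and_eventually (hcz.eventually (gt_mem_nhds hlt))).exists
      exact absurd hy1.2 (not_le.2 hy2)
    · exfalso
      have h := eventually_nhdsWithin_iff.1 (hbd z (closure_mono hKU hz) hzU _ hmid)
      obtain ⟨y, hy1, hy2⟩ := (hfr.and_eventually h).exists
      have := hy2 hy1.1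
      have := hy1.2
      linarith
  have hKc : IsCompact K := Metric.isCompact_of_isClosed_isBounded hKclosed (hUb.subset hKU)
  obtain ⟨c, hcK, hcmax⟩ := hKc.exists_isMaxOn ⟨z₁, hz₁, le_rfl⟩
    (f := fun z => ‖f z‖) (hf.continuousOn.norm.mono hKU)
  have hmax : IsMaxOn (norm ∘ f) U c := by
    intro z hz
    by_cases h : M₁ ≤ ‖f z‖
    · exact hcmax ⟨hz, h⟩
    · exact (not_le.1 h).le.trans hcK.2
  have hconst := Complex.norm_eqOn_of_isPreconnected_of_isMaxOn hUc hUo hf hcK.1 hmax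
  have hne : (𝓝[U] x₀).NeBot := mem_closure_iff_nhdsWithin_neBot.1 hx₀
  obtain ⟨y, hy1, hy2⟩ := ((hbd x₀ hx₀ hx₀' _ hmid).and self_mem_nhdsWithin).exists
  have h1 : ‖f y‖ = ‖f c‖ := hconst hy2
  have h2 := hcK.2
  linarith

lemma cayley_re_im (R : ℝ) (z : ℂ) (hz : (R : ℂ) - z ≠ 0) :
    ((R + z) / (R - z)).re = (R ^ 2 - ‖z‖ ^ 2) / Complex.normSq (R - z) ∧
    ((R + z) / (R - z)).im = 2 * R * z.im / Complex.normSq (R - z) := by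
  have hN : Complex.normSq (R - z) ≠ 0 := by simpa using hz
  rw [Complex.div_re, Complex.div_im, Complex.sq_norm, Complex.normSq_apply z]
  constructor
  · rw [← add_div]; congr 1; simp; ring
  · rw [← sub_div]; congr 1; simp; ring

/-- A Phragmén–Lindelöf principle: if `Im g` tends to `0` at each real point and is `o(|z|)` at
infinity, then `Im g ≤ 0`. On the half-disc of radius `R`, the harmonic function
`arg ((R + z) / (R - z))` is nonnegative, equals `π/2` on the arc, and is `O(1/R)` at a fixed point,
so `ε R` times it dominates `Im g`. -/
lemma im_nonpos_of_boundary {g : ℂ → ℂ} (hg : DifferentiableOn ℂ g UHP)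
    (hgrow : ∀ ε > 0, ∃ R : ℝ, ∀ z ∈ UHP, R ≤ ‖z‖ → |(g z).im| ≤ ε * ‖z‖)
    (hbd : ∀ x : ℝ, Tendsto (fun z => (g z).im) (𝓝[UHP] (x : ℂ)) (𝓝 0)) :
    ∀ z ∈ UHP, (g z).im ≤ 0 := by
  intro z₀ hz₀
  have hz₀' : 0 < z₀.im := hz₀
  suffices h : ∀ ε > 0, (g z₀).im ≤ ε * (8 / 3 * z₀.im) by
    refine le_of_forall_pos_le_add fun ε hε => ?_
    have := h (ε / (8 / 3 * z₀.im)) (by positivity)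
    rwa [div_mul_cancel₀ _ (by positivity), ← zero_add ε] at this
  intro ε hε
  obtain ⟨R₀, hR₀⟩ := hgrow ε hε
  set R := max R₀ (2 * ‖z₀‖ + 1) with hR
  have hR1 : 2 * ‖z₀‖ + 1 ≤ R := le_max_right _ _
  have hRpos : 0 < R := lt_of_lt_of_le (by positivity) hR1
  set U : Set ℂ := Metric.ball 0 R ∩ UHP with hU
  have hUo : IsOpen U := Metric.isOpen_ball.inter isOpen_UHP
  have hUc : Convex ℝ U := (convex_ball 0 R).inter (convex_halfSpace_im_gt 0)
  have hcl : ∀ x ∈ closure U, ‖x‖ ≤ R ∧ 0 ≤ x.im := by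
    intro x hx
    constructor
    · have := Metric.closure_ball_subset_closedBall (closure_mono inter_subset_left hx)
      simpa using this
    · exact mem_closure_UHP.1 (closure_mono inter_subset_right hx)
  have hne : ∀ x : ℂ, 0 < x.im → (R : ℂ) - x ≠ 0 := by
    intro x hx h
    have := congrArg Complex.im h
    simp at this; linarith
  set q : ℂ → ℂ := fun z => (R + z) / (R - z) with hq
  have hqim : ∀ x : ℂ, 0 < x.im → 0 < (q x).im := by
    intro x hx
    simp only [hq]
    rw [(cayley_re_im R x (hne x hx)).2]
    have := Complex.normSq_pos.2 (hne x hx)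
    positivity
  have hqd : ∀ x : ℂ, 0 < x.im → DifferentiableAt ℂ q x := by
    intro x hx
    exact ((differentiableAt_const _).add differentiableAt_id).div
      ((differentiableAt_const _).sub differentiableAt_id) (hne x hx)
  have hslit : ∀ x : ℂ, 0 < x.im → q x ∈ Complex.slitPlane := fun x hx => Or.inr (hqim x hx).ne'
  have hargnn : ∀ x : ℂ, 0 < x.im → 0 ≤ (q x).arg := fun x hx =>
    Complex.arg_nonneg_iff.2 (hqim x hx).le
  -- `log ‖f‖ = Im g - ε R arg q` is the function to be bounded above by `0`.
  set f : ℂ → ℂ := fun z => Complex.exp (-Complex.I * g z + (ε * R : ℝ) * Complex.I * Complex.log (q z)) with hf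
  have hnorm : ∀ z, ‖f z‖ = Real.exp ((g z).im - ε * R * (q z).arg) := by
    intro z
    simp only [hf, Complex.norm_exp]
    congr 1
    simp [Complex.log_im]
    ring
  have hfd : DifferentiableOn ℂ f U := by
    intro z hz
    have hz2 : 0 < z.im := hz.2
    refine DifferentiableAt.differentiableWithinAt ?_
    exact (((hg.differentiableAt (isOpen_UHP.mem_nhds hz.2)).const_mul _).add
      (((hqd z hz2).clog (hslit z hz2)).const_mul _)).cexp
  have h0cl : (0 : ℂ) ∈ closure U := by
    have h : Tendsto (fun t : ℝ => (t : ℂ) * Complex.I) (𝓝[>] 0) (𝓝 0) := by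
      have : Continuous fun t : ℝ => (t : ℂ) * Complex.I := by fun_prop
      have := (this.tendsto 0).mono_left (nhdsWithin_le_nhds (s := Ioi 0))
      simpa using this
    refine mem_closure_of_tendsto h ?_
    filter_upwards [Ioo_mem_nhdsGT hRpos] with t ht
    refine ⟨?_, ?_⟩
    · simp [abs_of_pos ht.1, ht.2]
    · show 0 < ((t : ℂ) * Complex.I).im
      simpa using ht.1
  have hmain := norm_le_one_of_boundary hUo hUc.isPreconnected
    (Metric.isBounded_ball.subset inter_subset_left) hfd (by
      intro x hx hxU M hM
      obtain ⟨hx1, hx2⟩ := hcl x hx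
      rcases hx2.eq_or_lt with him | him
      · have hxr : x = ((x.re : ℝ) : ℂ) := Complex.ext (by simp) (by simp [← him])
        have ht := (hbd x.re).mono_left (nhdsWithin_mono _ (inter_subset_right : U ⊆ UHP))
        rw [← hxr] at ht
        have ht2 := (Real.continuous_exp.tendsto 0).comp ht
        rw [Real.exp_zero] at ht2
        filter_upwards [ht2.eventually (gt_mem_nhds hM), self_mem_nhdsWithin] with z hz hzU
        rw [hnorm]
        refine le_trans (Real.exp_le_exp.2 ?_) hz.le
        have := hargnn z hzU.2
        have : 0 ≤ ε * R * (q z).arg := by positivity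
        linarith
      · have hxR : ‖x‖ = R := by
          refine le_antisymm hx1 ?_
          by_contra hlt
          push Not at hlt
          exact hxU ⟨by simpa using hlt, him⟩
        have hqre : (q x).re = 0 := by
          simp only [hq]
          rw [(cayley_re_im R x (hne x him)).1, hxR]; simp
        have harg : (q x).arg = Real.pi / 2 :=
          Complex.arg_eq_pi_div_two_iff.2 ⟨hqre, hqim x him⟩
        have hc1 : ContinuousAt (fun z => (g z).im - ε * R * (q z).arg) x := by
          refine ContinuousAt.sub ?_ (ContinuousAt.mul continuousAt_const ?_)
          · exact Complex.continuous_im.continuousAt.comp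
              (hg.differentiableAt (isOpen_UHP.mem_nhds him)).continuousAt
          · exact (Complex.continuousAt_arg (hslit x him)).comp (hqd x him).continuousAt
        have hval : (g x).im - ε * R * (q x).arg < 0 := by
          have h1 := (le_abs_self _).trans (hR₀ x him (by rw [hxR]; exact le_max_left _ _))
          rw [hxR] at h1
          rw [harg]
          have h2 : 1 < Real.pi / 2 := by linarith [Real.pi_gt_three]
          have h3 : 0 < ε * R := by positivity
          nlinarith
        filter_upwards [nhdsWithin_le_nhds (hc1.eventually (gt_mem_nhds hval))] with z hz
        rw [hnorm]
        exact (Real.exp_le_one_iff.2 hz.le).trans hM.le)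
    h0cl (fun h => lt_irrefl (0 : ℝ) h.2)
  have hz₀U : z₀ ∈ U := ⟨by simp; linarith [norm_nonneg z₀], hz₀⟩
  have h := hmain z₀ hz₀U
  rw [hnorm, Real.exp_le_one_iff] at h
  obtain ⟨e1, e2⟩ := cayley_re_im R z₀ (hne z₀ hz₀')
  have hN := Complex.normSq_pos.2 (hne z₀ hz₀')
  have hden : 3 / 4 * R ^ 2 ≤ R ^ 2 - ‖z₀‖ ^ 2 := by nlinarith [norm_nonneg z₀]
  have hden0 : 0 < R ^ 2 - ‖z₀‖ ^ 2 := lt_of_lt_of_le (by positivity) hden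
  have hre : 0 < (q z₀).re := by simp only [hq]; rw [e1]; positivity
  have hlt : (q z₀).arg < Real.pi / 2 := Complex.arg_lt_pi_div_two_iff.2 (Or.inl hre)
  have htan := Real.le_tan (hargnn z₀ hz₀') hlt
  rw [Complex.tan_arg] at htan
  have hquot : (q z₀).im / (q z₀).re ≤ 8 / 3 * z₀.im / R := by
    simp only [hq]
    rw [e1, e2, div_div_div_cancel_right₀ hN.ne', div_le_div_iff₀ hden0 hRpos]
    nlinarith
  calc (g z₀).im ≤ ε * R * (q z₀).arg := by linarith
    _ ≤ ε * R * (8 / 3 * z₀.im / R) := by gcongr; exact htan.trans hquot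
    _ = ε * (8 / 3 * z₀.im) := by field_simp

/-- A holomorphic function on the upper half-plane that is asymptotic to the identity at infinity and
has real boundary values is a real translation. -/
lemma eq_add_const_of_boundary {p : ℂ → ℂ} (hp : DifferentiableOn ℂ p UHP)
    (hgrow : ∀ ε > 0, ∃ R : ℝ, ∀ z ∈ UHP, R ≤ ‖z‖ → ‖p z - z‖ ≤ ε * ‖z‖)
    (hbd : ∀ x : ℝ, Tendsto (fun z => (p z).im) (𝓝[UHP] (x : ℂ)) (𝓝 0)) :
    ∃ c : ℝ, ∀ z ∈ UHP, p z = z + c := by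
  have hgd : DifferentiableOn ℂ (fun z => p z - z) UHP := hp.sub differentiableOn_id
  have hb1 : ∀ x : ℝ, Tendsto (fun z => (p z - z).im) (𝓝[UHP] (x : ℂ)) (𝓝 0) := by
    intro x
    have := (Complex.continuous_im.tendsto (x : ℂ)).mono_left (nhdsWithin_le_nhds (s := UHP))
    simpa using (hbd x).sub this
  have h1 := im_nonpos_of_boundary hgd (fun ε hε => by
    obtain ⟨R, hR⟩ := hgrow ε hε
    exact ⟨R, fun z hz hzR => (Complex.abs_im_le_norm _).trans (hR z hz hzR)⟩) hb1
  have h2 := im_nonpos_of_boundary hgd.neg (fun ε hε => by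
    obtain ⟨R, hR⟩ := hgrow ε hε
    refine ⟨R, fun z hz hzR => (Complex.abs_im_le_norm _).trans ?_⟩
    simp only [Pi.neg_apply, norm_neg]
    exact hR z hz hzR) (fun x => by simpa using (hb1 x).neg)
  have h3 : ∀ z ∈ UHP, (p z - z).im = 0 := by
    intro z hz
    refine le_antisymm (h1 z hz) ?_
    have := h2 z hz
    rw [Pi.neg_apply, Complex.neg_im] at this
    linarith
  have hI : Complex.I ∈ UHP := by show 0 < Complex.I.im; simp
  rcases (hgd.analyticOnNhd isOpen_UHP).is_constant_or_isOpen
    (convex_halfSpace_im_gt 0).isPreconnected with ⟨w, hw⟩ | ho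
  · refine ⟨w.re, fun z hz => ?_⟩
    have h4 := h3 z hz
    have h5 : p z - z = w := hw z hz
    rw [h5] at h4
    have : ((w.re : ℝ) : ℂ) = w := Complex.ext (by simp) (by simp [h4])
    rw [this, ← h5]; ring
  · exfalso
    have ho' := ho UHP subset_rfl isOpen_UHP
    set w := p Complex.I - Complex.I
    have hw : w ∈ (fun z => p z - z) '' UHP := ⟨_, hI, rfl⟩
    obtain ⟨r, hr, hball⟩ := Metric.isOpen_iff.1 ho' w hw
    have : w + (r / 2 : ℝ) * Complex.I ∈ Metric.ball w r := by
      simp [abs_of_pos hr]; linarith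
    obtain ⟨z, hz, hzw⟩ := hball this
    have h6 := h3 z hz
    have h7 := h3 _ hI
    replace hzw : p z - z = w + (r / 2 : ℝ) * Complex.I := hzw
    rw [hzw, Complex.add_im, h7] at h6
    simp at h6
    exact hr.ne' h6

/-- The inverse of an injective holomorphic function is holomorphic. The critical points of `f` are
isolated, and there `G` is continuous and hence has a removable singularity, so the nonvanishing of
`f'` is not needed beforehand. -/
lemma differentiableAt_rightInverse {f G : ℂ → ℂ} {U : Set ℂ} (hUo : IsOpen U) (hUc : IsPreconnected U)
    (hf : DifferentiableOn ℂ f U) (hinj : InjOn f U) (hG : ∀ w ∈ f '' U, G w ∈ U ∧ f (G w) = w)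
    {w₀ : ℂ} (hw₀ : w₀ ∈ f '' U) : DifferentiableAt ℂ G w₀ := by
  have hfa := hf.analyticOnNhd hUo
  have hnc : ∀ V ⊆ U, IsOpen V → V.Nonempty → ¬ ∃ w, ∀ z ∈ V, f z = w := by
    rintro V hVU hV ⟨a, ha⟩ ⟨w, hw⟩
    obtain ⟨r, hr, hball⟩ := Metric.isOpen_iff.1 hV a ha
    have hb : a + (r / 2 : ℝ) ∈ V := hball (by simp [abs_of_pos hr]; linarith)
    have := hinj (hVU ha) (hVU hb) ((hw a ha).trans (hw _ hb).symm)
    simp at this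
    exact hr.ne' this
  have hopen : ∀ s ⊆ U, IsOpen s → IsOpen (f '' s) :=
    (hfa.is_constant_or_isOpen hUc).resolve_left
      (hnc U subset_rfl hUo ⟨_, (hG w₀ hw₀).1⟩)
  have hWo : IsOpen (f '' U) := hopen U subset_rfl hUo
  have hcont : ∀ w ∈ f '' U, ContinuousAt G w := by
    intro w hw
    obtain ⟨h1, h2⟩ := hG w hw
    rw [ContinuousAt, (nhds_basis_opens (G w)).tendsto_right_iff]
    rintro V ⟨hV1, hV2⟩
    have hm : w ∈ f '' (V ∩ U) := ⟨G w, ⟨hV1, h1⟩, h2⟩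
    filter_upwards [(hopen _ inter_subset_right (hV2.inter hUo)).mem_nhds hm] with y hy
    obtain ⟨ζ, hζ, rfl⟩ := hy
    obtain ⟨h3, h4⟩ := hG (f ζ) ⟨ζ, hζ.2, rfl⟩
    rw [hinj h3 hζ.2 h4]
    exact hζ.1
  -- away from the critical values the inverse function theorem applies
  have hreg : ∀ w ∈ f '' U, deriv f (G w) ≠ 0 → DifferentiableAt ℂ G w := by
    intro w hw hd
    refine (HasDerivAt.of_local_left_inverse (hcont w hw)
      (hf.differentiableAt (hUo.mem_nhds (hG w hw).1)).hasDerivAt hd ?_).differentiableAt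
    filter_upwards [hWo.mem_nhds hw] with y hy
    exact (hG y hy).2
  have hda : AnalyticAt ℂ (deriv f) (G w₀) := (hfa _ (hG w₀ hw₀).1).deriv
  rcases hda.eventually_eq_zero_or_eventually_ne_zero with h0 | h0
  · exfalso
    obtain ⟨r, hr, hball⟩ := Metric.eventually_nhds_iff_ball.1
      (h0.and (hUo.mem_nhds (hG w₀ hw₀).1))
    have hd : DifferentiableOn ℂ f (Metric.ball (G w₀) r) := hf.mono fun z hz => (hball z hz).2
    refine hnc (Metric.ball (G w₀) r) (fun z hz => (hball z hz).2) Metric.isOpen_ball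
      ⟨_, Metric.mem_ball_self hr⟩ ?_
    exact Metric.isOpen_ball.exists_is_const_of_deriv_eq_zero
      (convex_ball _ _).isPreconnected hd (fun z hz => (hball z hz).1)
  · have ht : Tendsto G (𝓝[≠] w₀) (𝓝[≠] (G w₀)) := by
      refine tendsto_nhdsWithin_iff.2 ⟨(hcont w₀ hw₀).mono_left nhdsWithin_le_nhds, ?_⟩
      filter_upwards [self_mem_nhdsWithin, nhdsWithin_le_nhds (hWo.mem_nhds hw₀)] with w hw hwW
      intro heq
      apply hw
      have := congrArg f heq
      rwa [(hG w hwW).2, (hG w₀ hw₀).2] at this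
    have hdp : ∀ᶠ w in 𝓝[≠] w₀, DifferentiableAt ℂ G w := by
      filter_upwards [ht.eventually h0, nhdsWithin_le_nhds (hWo.mem_nhds hw₀)] with w hw hwW
      exact hreg w hwW hw
    exact (Complex.analyticAt_of_differentiable_on_punctured_nhds_of_continuousAt hdp
      (hcont w₀ hw₀)).differentiableAt

/-! ### Uniqueness of the normalized map -/

lemma zero_mem_closure_UHP : (0 : ℂ) ∈ closure UHP := mem_closure_UHP.2 (by simp)

/-- Any map `H` with the given normalizations is `modelMap`. The self-map `φ = H⁻¹ ∘ modelMap` of the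
upper half-plane has real boundary values, because `modelMap` leaves `Ω*` on the real line, and
`φ z ~ z` at infinity, so it is a translation `z ↦ z + c`. As `H 0 = 0` and `0` is the only real
zero of `modelMap`, `c = 0`. Surjectivity of `modelMap` onto `Ω*` is never used. -/
lemma eq_modelMap {H : ℂ → ℂ}
    (hcont : ContinuousOn H (closure UHP)) (hholo : DifferentiableOn ℂ H UHP)
    (hbij : BijOn H UHP Ωstar) (h0 : H 0 = 0)
    (hlim : Tendsto (fun z => H z / z) (comap (fun z : ℂ => ‖z‖) atTop ⊓ principal UHP)
      (nhds 1)) : EqOn H modelMap (closure UHP) := by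
  have hne : ∀ z ∈ UHP, z ≠ 0 := fun z hz h => by
    have : 0 < z.im := hz
    simp [h] at this
  -- the growth hypothesis `H z / z → 1` in the form `H z - z = o(|z|)`
  have hH : ∀ ε > 0, ∃ R : ℝ, ∀ z ∈ UHP, R ≤ ‖z‖ → ‖H z - z‖ ≤ ε * ‖z‖ := by
    intro ε hε
    have h1 := hlim.eventually (Metric.closedBall_mem_nhds 1 hε)
    rw [eventually_inf_principal] at h1
    obtain ⟨V, hV, hVs⟩ := mem_comap.1 h1
    obtain ⟨R, hR⟩ := mem_atTop_sets.1 hV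
    refine ⟨R, fun z hz hzR => ?_⟩
    have h2 : H z / z ∈ Metric.closedBall 1 ε := hVs (show ‖z‖ ∈ V from hR _ hzR) hz
    have h3 : H z - z = (H z / z - 1) * z := by field_simp [hne z hz]
    rw [h3, norm_mul]
    gcongr
    simpa [dist_eq_norm] using h2
  set G := Function.invFunOn H UHP with hGdef
  have hGm : ∀ w ∈ Ωstar, G w ∈ UHP ∧ H (G w) = w := fun w hw =>
    Function.invFunOn_pos (hbij.surjOn hw)
  have hφ : ∀ z ∈ UHP, G (modelMap z) ∈ UHP ∧ H (G (modelMap z)) = modelMap z := fun z hz =>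
    hGm _ (modelMap_mapsTo hz)
  have hUc : IsPreconnected UHP := (convex_halfSpace_im_gt 0).isPreconnected
  have hd : DifferentiableOn ℂ (fun z => G (modelMap z)) UHP := by
    intro z hz
    have h1 : DifferentiableAt ℂ G (modelMap z) :=
      differentiableAt_rightInverse isOpen_UHP hUc hholo hbij.injOn
        (fun w hw => hGm w (hbij.image_eq ▸ hw)) (by rw [hbij.image_eq]; exact modelMap_mapsTo hz)
    exact (h1.comp z ((differentiableOn_modelMap).differentiableAt
      (isOpen_UHP.mem_nhds hz))).differentiableWithinAt
  have hK : ∀ B : ℝ, ∃ C, ∀ z ∈ closure UHP, ‖z‖ ≤ B → ‖H z‖ ≤ C := by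
    intro B
    have hc : IsCompact (Metric.closedBall (0 : ℂ) B ∩ closure UHP) :=
      (isCompact_closedBall _ _).inter_right isClosed_closure
    obtain ⟨C, hC⟩ := hc.exists_bound_of_continuousOn (hcont.mono inter_subset_right)
    exact ⟨C, fun z hz hB => hC z ⟨by simpa using hB, hz⟩⟩
  have hbound : ∃ R : ℝ, ∀ ζ ∈ UHP, ∀ B, ‖H ζ‖ ≤ B → ‖ζ‖ ≤ max R (2 * B) := by
    obtain ⟨R, hR⟩ := hH (1 / 2) (by norm_num)
    refine ⟨R, fun ζ hζ B hB => ?_⟩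
    rcases le_or_gt R ‖ζ‖ with h | h
    · refine le_max_of_le_right ?_
      have h1 := hR ζ hζ h
      have h2 := norm_sub_norm_le ζ (H ζ)
      rw [norm_sub_rev] at h2
      nlinarith [norm_nonneg ζ]
    · exact le_max_of_le_left h.le
  obtain ⟨c, hc⟩ := eq_add_const_of_boundary hd (by
    intro ε hε
    set δ := min (ε / 5) (1 / 2) with hδ
    have hδ0 : 0 < δ := by positivity
    have hδ1 : δ ≤ 1 / 2 := min_le_right _ _
    have hδ2 : δ ≤ ε / 5 := min_le_left _ _
    obtain ⟨R₁, hR₁⟩ := hH δ hδ0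
    obtain ⟨R₂, hR₂⟩ := modelMap_growth δ hδ0
    obtain ⟨C, hC⟩ := hK R₁
    refine ⟨max R₂ (2 * C + 1), fun z hz hzR => ?_⟩
    obtain ⟨h1, h2⟩ := hφ z hz
    set ζ := G (modelMap z)
    have h3 := hR₂ z (le_of_lt hz) ((le_max_left _ _).trans hzR)
    have h4 : 2 * C + 1 ≤ ‖z‖ := (le_max_right _ _).trans hzR
    have h5 := norm_sub_norm_le z (modelMap z)
    have h6 := norm_sub_norm_le (modelMap z) z
    rw [norm_sub_rev] at h5
    have hz0 := norm_nonneg z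
    -- `ζ` is large since `H` is bounded on bounded sets while `modelMap z` is large
    have h7 : R₁ ≤ ‖ζ‖ := by
      by_contra hlt
      push Not at hlt
      have := hC ζ (subset_closure h1) hlt.le
      rw [h2] at this
      nlinarith
    have h8 := hR₁ ζ h1 h7
    rw [h2] at h8
    have h9 := norm_sub_norm_le ζ (modelMap z)
    rw [norm_sub_rev] at h9
    have hζ0 := norm_nonneg ζ
    have h10 : ‖ζ‖ ≤ 4 * ‖z‖ := by nlinarith
    have h11 : ‖ζ - z‖ ≤ ‖modelMap z - ζ‖ + ‖modelMap z - z‖ := by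
      rw [norm_sub_rev (modelMap z) ζ]
      exact norm_sub_le_norm_sub_add_norm_sub _ _ _
    nlinarith) (by
    intro x
    obtain ⟨R, hR⟩ := hbound
    have hmc := continuous_modelMap.continuousAt (x := (x : ℂ))
    rw [Metric.tendsto_nhds]
    intro δ hδ
    set B := max R (2 * (‖modelMap x‖ + 1))
    -- the points of `S` have compact image under `H`, at a positive distance from `modelMap x ∉ Ω*`,
    -- so `G (modelMap z)` cannot be in `S` when `z` is close to `x`
    set S := Metric.closedBall (0 : ℂ) B ∩ {z | δ ≤ z.im} with hS
    have hSU : S ⊆ UHP := fun z hz => lt_of_lt_of_le hδ hz.2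
    have hSc : IsCompact S :=
      (isCompact_closedBall _ _).inter_right (isClosed_le continuous_const Complex.continuous_im)
    have hHS : IsClosed (H '' S) := (hSc.image_of_continuousOn
      (hholo.continuousOn.mono hSU)).isClosed
    have hx : modelMap x ∈ (H '' S)ᶜ := by
      rintro ⟨ζ, hζ, he⟩
      exact modelMap_real_notMem x (he ▸ hbij.mapsTo (hSU hζ))
    filter_upwards [nhdsWithin_le_nhds (hmc.eventually (hHS.isOpen_compl.mem_nhds hx)),
      nhdsWithin_le_nhds (hmc.norm.eventually (gt_mem_nhds (lt_add_one ‖modelMap x‖))),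
      self_mem_nhdsWithin] with z hz1 hz2 hz
    obtain ⟨h1, h2⟩ := hφ z hz
    have h3 := hR _ h1 (‖modelMap x‖ + 1) (by rw [h2]; exact hz2.le)
    have h4 : (G (modelMap z)).im < δ := by
      by_contra hlt
      push Not at hlt
      exact hz1 ⟨_, ⟨mem_closedBall_zero_iff.2 h3, hlt⟩, h2⟩
    have h5 : 0 < (G (modelMap z)).im := h1
    rw [dist_zero_right, Real.norm_eq_abs, abs_of_pos h5]
    exact h4)
  have hHc : ∀ z ∈ UHP, H (z + c) = modelMap z := fun z hz => by
    rw [← hc z hz]; exact (hφ z hz).2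
  have hc0 : c = 0 := by
    have hcl : ((-c : ℝ) : ℂ) ∈ closure UHP := mem_closure_UHP.2 (by simp)
    have : (𝓝[UHP] ((-c : ℝ) : ℂ)).NeBot := mem_closure_iff_nhdsWithin_neBot.1 hcl
    have h1 : Tendsto (fun z : ℂ => z + c) (𝓝[UHP] ((-c : ℝ) : ℂ)) (𝓝[closure UHP] 0) := by
      refine tendsto_nhdsWithin_iff.2 ⟨?_, ?_⟩
      · have : Tendsto (fun z : ℂ => z + c) (𝓝 ((-c : ℝ) : ℂ)) (𝓝 (((-c : ℝ) : ℂ) + c)) :=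
          (continuous_id.add continuous_const).tendsto _
        simp only [Complex.ofReal_neg, neg_add_cancel] at this
        simpa using this.mono_left nhdsWithin_le_nhds
      · filter_upwards [self_mem_nhdsWithin] with z hz
        refine subset_closure (show 0 < (z + c).im from ?_)
        simpa using (show 0 < z.im from hz)
    have h2 := (hcont 0 zero_mem_closure_UHP).tendsto.comp h1
    have h3 : Tendsto (H ∘ fun z : ℂ => z + c) (𝓝[UHP] ((-c : ℝ) : ℂ))
        (𝓝 (modelMap ((-c : ℝ) : ℂ))) := by
      refine ((continuous_modelMap.tendsto _).mono_left nhdsWithin_le_nhds).congr' ?_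
      filter_upwards [self_mem_nhdsWithin] with z hz using (hHc z hz).symm
    have h4 := tendsto_nhds_unique h2 h3
    rw [h0] at h4
    have := modelMap_real_eq_zero h4.symm
    linarith
  have hU : EqOn H modelMap UHP := fun z hz => by
    have := hHc z hz
    rwa [hc0, Complex.ofReal_zero, add_zero] at this
  exact hU.of_subset_closure hcont continuous_modelMap.continuousOn subset_closure subset_rfl

/-! ### Evaluation of the integral -/

/-- The argument of `fad` along the positive real axis, in the variable `x = log t = 2 log s`. -/
noncomputable def argExp (x : ℝ) : ℝ := (fad (Complex.exp ((x : ℂ) / 2))).arg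

/-- The integral of `log ‖fad‖` over a quarter circle of radius `e ^ (x / 2)`. -/
noncomputable def arcLog (x : ℝ) : ℝ :=
  ∫ θ in (0 : ℝ)..Real.pi, Real.log ‖fad (Complex.exp (((x : ℂ) + θ * Complex.I) / 2))‖

lemma im_exp_half_nonneg {z : ℂ} (h0 : 0 ≤ z.im) (hpi : z.im ≤ Real.pi) :
    0 ≤ (Complex.exp (z / 2)).im := by
  rw [Complex.exp_im]
  have h : (z / 2).im = z.im / 2 := by simp
  rw [h]
  exact mul_nonneg (Real.exp_pos _).le (Real.sin_nonneg_of_nonneg_of_le_pi (by linarith)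
    (by linarith [Real.pi_pos]))

lemma differentiableAt_log_fad_exp {z : ℂ} (h0 : 0 ≤ z.im) (hpi : z.im ≤ Real.pi) :
    DifferentiableAt ℂ (fun z => Complex.log (fad (Complex.exp (z / 2)))) z := by
  have h1 : DifferentiableAt ℂ (fun z => fad (Complex.exp (z / 2))) z :=
    (differentiable_fad.comp (by fun_prop : Differentiable ℂ fun z : ℂ => Complex.exp (z / 2))) z
  exact h1.clog (Or.inl (fad_re_pos _ (im_exp_half_nonneg h0 hpi)))

lemma norm_exp_half (x θ : ℝ) :
    ‖Complex.exp (((x : ℂ) + θ * Complex.I) / 2)‖ = Real.exp (x / 2) := by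
  rw [Complex.norm_exp]; simp

lemma continuous_argExp : Continuous argExp := by
  have : argExp = fun x : ℝ => (Complex.log (fad (Complex.exp ((x : ℂ) / 2)))).im := by
    funext x; rw [Complex.log_im]; rfl
  rw [this, continuous_iff_continuousAt]
  intro x
  have h := (differentiableAt_log_fad_exp (z := (x : ℂ)) (by simp)
    (by simpa using Real.pi_pos.le)).continuousAt
  exact Complex.continuous_im.continuousAt.comp (h.comp Complex.continuous_ofReal.continuousAt)

/-- Cauchy's theorem for `log ∘ fad` on a quarter annulus: on the imaginary axis `fad` is real
and positive, so that side contributes nothing to the imaginary part. -/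
lemma integral_argExp (a b : ℝ) : ∫ x in a..b, argExp x = arcLog a - arcLog b := by
  set g : ℂ → ℂ := fun z => Complex.log (fad (Complex.exp (z / 2))) with hg
  have hgd : ∀ z : ℂ, 0 ≤ z.im → z.im ≤ Real.pi → ContinuousAt g z := fun z h1 h2 =>
    (differentiableAt_log_fad_exp h1 h2).continuousAt
  have hpi := Real.pi_pos
  have key := Complex.integral_boundary_rect_eq_zero_of_differentiableOn g (a : ℂ)
    ((b : ℂ) + Real.pi * Complex.I) (by
      intro z hz
      have h2 := hz.2
      simp only [mem_preimage, Complex.ofReal_im, Complex.add_im, Complex.mul_im,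
        Complex.ofReal_re, Complex.I_im, mul_one, Complex.I_re, mul_zero, add_zero, zero_add,
        uIcc_of_le hpi.le] at h2
      exact (differentiableAt_log_fad_exp h2.1 h2.2).differentiableWithinAt)
  simp only [Complex.ofReal_re, Complex.ofReal_im, Complex.add_re, Complex.add_im, Complex.mul_re,
    Complex.mul_im, Complex.I_re, Complex.I_im, mul_zero, mul_one, zero_mul, sub_zero, add_zero,
    zero_add, Complex.ofReal_zero] at key
  have hint1 : IntervalIntegrable (fun x : ℝ => g x) volume a b := by
    refine ContinuousOn.intervalIntegrable fun x _ => ContinuousAt.continuousWithinAt ?_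
    exact (hgd x (by simp) (by simpa using hpi.le)).comp Complex.continuous_ofReal.continuousAt
  have hint2 : IntervalIntegrable (fun x : ℝ => g (x + Real.pi * Complex.I)) volume a b := by
    refine ContinuousOn.intervalIntegrable fun x _ => ContinuousAt.continuousWithinAt ?_
    exact ContinuousAt.comp (f := fun x : ℝ => (x : ℂ) + Real.pi * Complex.I)
      (hgd _ (by simpa using hpi.le) (by simp)) (by fun_prop)
  have hint3 : ∀ c : ℝ,
      IntervalIntegrable (fun y : ℝ => g (c + y * Complex.I)) volume 0 Real.pi := by
    intro c
    refine ContinuousOn.intervalIntegrable fun y hy => ContinuousAt.continuousWithinAt ?_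
    rw [uIcc_of_le hpi.le] at hy
    exact ContinuousAt.comp (f := fun y : ℝ => (c : ℂ) + y * Complex.I)
      (hgd _ (by simpa using hy.1) (by simpa using hy.2)) (by fun_prop)
  have e1 : (∫ x in a..b, g x).im = ∫ x in a..b, argExp x := by
    rw [← Complex.imCLM_apply, ← Complex.imCLM.intervalIntegral_comp_comm hint1]
    simp only [hg, Complex.imCLM_apply, Complex.log_im]
    rfl
  -- the top side of the rectangle is sent by `z ↦ e^{z/2}` to the imaginary axis
  have e2 : (∫ x in a..b, g (x + Real.pi * Complex.I)).im = 0 := by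
    rw [← Complex.imCLM_apply, ← Complex.imCLM.intervalIntegral_comp_comm hint2]
    have : ∀ x : ℝ, Complex.imCLM (g (x + Real.pi * Complex.I)) = 0 := by
      intro x
      have hexp : Complex.exp (((x : ℂ) + Real.pi * Complex.I) / 2)
          = ((Real.exp (x / 2) : ℝ) : ℂ) * Complex.I := by
        rw [add_div, Complex.exp_add]
        have : (Real.pi : ℂ) * Complex.I / 2 = (Real.pi / 2 : ℂ) * Complex.I := by ring
        rw [this, Complex.exp_pi_div_two_mul_I]
        push_cast
        rfl
      simp only [hg, hexp, Complex.imCLM_apply, Complex.log_im]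
      rw [Complex.arg_eq_zero_iff]
      exact ⟨(fad_re_pos _ (by rw [Complex.im_ofReal_mul, Complex.I_im, mul_one]; exact (Real.exp_pos _).le)).le, fad_imag _⟩
    simp [this]
  have e3 : ∀ c : ℝ, (∫ y in (0 : ℝ)..Real.pi, g (c + y * Complex.I)).re = arcLog c := by
    intro c
    rw [← Complex.reCLM_apply, ← Complex.reCLM.intervalIntegral_comp_comm (hint3 c)]
    simp only [hg, Complex.reCLM_apply, Complex.log_re]
    rfl
  have := congrArg Complex.im key
  simp only [smul_eq_mul, Complex.add_im, Complex.sub_im, Complex.mul_im, Complex.I_re,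
    Complex.I_im, zero_mul, one_mul, zero_add, Complex.zero_im, e1, e2, e3] at this
  linarith

/-- If `log ‖fad‖` is within `ε` of the constant `-k` on the quarter circle, then `arcLog x` is within
`πε` of `-πk`. -/
lemma norm_arcLog_add_le {x k ε : ℝ}
    (h : ∀ s : ℂ, 0 ≤ s.im → ‖s‖ = Real.exp (x / 2) → |Real.log ‖fad s‖ + k| ≤ ε) :
    |arcLog x + Real.pi * k| ≤ Real.pi * ε := by
  have hpi := Real.pi_pos
  have hcont : IntervalIntegrable (fun θ : ℝ =>
      Real.log ‖fad (Complex.exp (((x : ℂ) + θ * Complex.I) / 2))‖) volume 0 Real.pi := by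
    refine ContinuousOn.intervalIntegrable fun y hy => ContinuousAt.continuousWithinAt ?_
    rw [uIcc_of_le hpi.le] at hy
    have h1 : ContinuousAt (fun θ : ℝ =>
        fad (Complex.exp (((x : ℂ) + θ * Complex.I) / 2))) y :=
      (differentiable_fad.continuous.comp (by fun_prop)).continuousAt
    refine h1.norm.log (norm_ne_zero_iff.2 fun h0 => ?_)
    have h2 := fad_re_pos _ (im_exp_half_nonneg (z := (x : ℂ) + y * Complex.I)
      (by simpa using hy.1) (by simpa using hy.2))
    rw [h0] at h2
    simp at h2
  have e : arcLog x + Real.pi * k = ∫ θ in (0 : ℝ)..Real.pi,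
      (Real.log ‖fad (Complex.exp (((x : ℂ) + θ * Complex.I) / 2))‖ + k) := by
    rw [intervalIntegral.integral_add hcont intervalIntegrable_const]
    simp [arcLog]
  rw [e, ← Real.norm_eq_abs]
  refine (intervalIntegral.norm_integral_le_of_norm_le_const (C := ε) fun θ hθ => ?_).trans
    (by rw [sub_zero, abs_of_pos hpi, mul_comm])
  rw [uIoc_of_le hpi.le] at hθ
  exact h _ (im_exp_half_nonneg (by simpa using hθ.1.le) (by simpa using hθ.2))
    (norm_exp_half x θ)

lemma tendsto_arcLog_atBot : Tendsto arcLog atBot (𝓝 0) := by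
  have hc : ContinuousAt (fun s => Real.log ‖fad s‖) 0 :=
    (differentiable_fad.continuous.continuousAt.norm).log (by simp [fad_zero])
  rw [Metric.tendsto_nhds]
  intro ε hε
  have hpi := Real.pi_pos
  obtain ⟨δ, hδ, h⟩ := Metric.continuousAt_iff.1 hc (ε / (2 * Real.pi)) (by positivity)
  have h2 : Tendsto (fun x : ℝ => Real.exp (x / 2)) atBot (𝓝 0) :=
    Real.tendsto_exp_atBot.comp (tendsto_id.atBot_div_const two_pos)
  filter_upwards [h2.eventually (gt_mem_nhds hδ)] with x hx
  have h3 := norm_arcLog_add_le (x := x) (k := 0) (ε := ε / (2 * Real.pi)) (fun s _ hs => by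
    have := h (x := s) (by rw [dist_zero_right, hs]; exact hx)
    rw [Real.dist_eq] at this
    simp only [fad_zero, norm_one, Real.log_one, sub_zero] at this
    simpa using this.le)
  rw [dist_zero_right, Real.norm_eq_abs]
  rw [mul_zero, add_zero] at h3
  refine h3.trans_lt ?_
  have : Real.pi * (ε / (2 * Real.pi)) = ε / 2 := by field_simp
  linarith

lemma tendsto_arcLog_atTop :
    Tendsto (fun x => arcLog x + Real.pi / 2 * x) atTop (𝓝 (-(Real.pi * Real.log √Real.pi))) := by
  rw [Metric.tendsto_nhds]
  intro ε hε
  have hpi := Real.pi_pos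
  obtain ⟨R, hR1, hR⟩ := tendsto_norm_mul_fad (ε / (2 * Real.pi)) (by positivity)
  have h2 : Tendsto (fun x : ℝ => Real.exp (x / 2)) atTop atTop :=
    Real.tendsto_exp_atTop.comp (tendsto_id.atTop_div_const two_pos)
  filter_upwards [h2.eventually_ge_atTop R] with x hx
  have h3 := norm_arcLog_add_le (x := x) (k := x / 2 + Real.log √Real.pi)
    (ε := ε / (2 * Real.pi)) (fun s hs1 hs => by
      have := hR s hs1 (hs ▸ hx)
      rwa [hs, Real.log_exp, add_assoc] at this)
  rw [Real.dist_eq]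
  have e : arcLog x + Real.pi / 2 * x - -(Real.pi * Real.log √Real.pi)
      = arcLog x + Real.pi * (x / 2 + Real.log √Real.pi) := by ring
  rw [e]
  refine h3.trans_lt ?_
  have : Real.pi * (ε / (2 * Real.pi)) = ε / 2 := by field_simp
  linarith

/-- The boundary values of `Im modelMap` on the positive axis, in the variable `x = log t`. -/
lemma argExp_eq (x : ℝ) : argExp x = (modelMap ((Real.exp x : ℝ) : ℂ)).im := by
  rw [modelMap_im, usqrt_ofReal_pos (Real.exp_pos x).le, Complex.ofReal_im, zero_add, argExp,
    Real.sqrt_eq_rpow, ← Real.exp_mul]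
  congr 2
  push_cast
  congr 1
  ring

lemma argExp_nonneg (x : ℝ) : 0 ≤ argExp x := by
  rw [argExp_eq, modelMap_im]
  simpa using arg_fad_nonneg _

lemma argExp_lt (x : ℝ) : argExp x < Real.pi / 2 := by
  rw [argExp_eq, modelMap_im]
  simpa using arg_fad_lt _

lemma integral_argExp_Iic (L : ℝ) :
    IntegrableOn argExp (Iic L) ∧ ∫ x in Iic L, argExp x = -arcLog L := by
  have ht : Tendsto (fun a => ∫ x in a..L, argExp x) atBot (𝓝 (-arcLog L)) := by
    simp only [integral_argExp]
    simpa using tendsto_arcLog_atBot.sub_const (arcLog L)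
  have hi : IntegrableOn argExp (Iic L) := by
    refine integrableOn_Iic_of_intervalIntegral_norm_tendsto (-arcLog L) L
      (fun a => continuous_argExp.integrableOn_Ioc) tendsto_id ?_
    simpa only [Real.norm_eq_abs, abs_of_nonneg (argExp_nonneg _), id] using ht
  exact ⟨hi, tendsto_nhds_unique (intervalIntegral_tendsto_integral_Iic L hi tendsto_id) ht⟩

lemma integral_argExp_Ioi (L : ℝ) :
    IntegrableOn (fun x => argExp x - Real.pi / 2) (Ioi L) ∧
      ∫ x in Ioi L, (argExp x - Real.pi / 2)
        = arcLog L + Real.pi / 2 * L + Real.pi * Real.log √Real.pi := by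
  have ht : Tendsto (fun b => ∫ x in L..b, (argExp x - Real.pi / 2)) atTop
      (𝓝 (arcLog L + Real.pi / 2 * L + Real.pi * Real.log √Real.pi)) := by
    have e : ∀ b, ∫ x in L..b, (argExp x - Real.pi / 2)
        = arcLog L + Real.pi / 2 * L - (arcLog b + Real.pi / 2 * b) := by
      intro b
      rw [intervalIntegral.integral_sub (continuous_argExp.intervalIntegrable _ _)
        intervalIntegrable_const, integral_argExp, intervalIntegral.integral_const, smul_eq_mul]
      ring
    simp only [e]
    simpa using tendsto_arcLog_atTop.const_sub (arcLog L + Real.pi / 2 * L)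
  have hi : IntegrableOn (fun x => argExp x - Real.pi / 2) (Ioi L) := by
    refine integrableOn_Ioi_of_intervalIntegral_norm_tendsto
      (-(arcLog L + Real.pi / 2 * L + Real.pi * Real.log √Real.pi)) L
      (fun a => (continuous_argExp.sub continuous_const).integrableOn_Ioc) tendsto_id ?_
    have : ∀ x, ‖argExp x - Real.pi / 2‖ = -(argExp x - Real.pi / 2) := fun x => by
      rw [Real.norm_eq_abs, abs_of_neg (by linarith [argExp_lt x])]
    simp only [this, intervalIntegral.integral_neg]
    exact ht.neg
  exact ⟨hi, tendsto_nhds_unique (intervalIntegral_tendsto_integral_Ioi L hi tendsto_id) ht⟩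

/-- With `t = e^x` the integral becomes one over `ℝ`, split at `x = log 2` into two integrals of
constant sign; the values `arcLog (log 2)` cancel. -/
lemma integral_modelMap :
    ∫ t in Ioi (0 : ℝ), ((modelMap t).im
        - (Real.pi / 2) * indicator (Ici (2 : ℝ)) (fun _ => 1) t) / t
      = Real.pi / 2 * Real.log (2 * Real.pi) := by
  set L := Real.log 2 with hL
  set f : ℝ → ℝ := fun x => argExp x - Real.pi / 2 * indicator (Ici L) (fun _ => 1) x with hf
  have hsub : ∫ t in Ioi (0 : ℝ), ((modelMap t).im
        - (Real.pi / 2) * indicator (Ici (2 : ℝ)) (fun _ => 1) t) / t = ∫ x, f x := by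
    rw [← Real.range_exp, ← image_univ, integral_image_eq_integral_abs_deriv_smul
      MeasurableSet.univ (fun x _ => (Real.hasDerivAt_exp x).hasDerivWithinAt)
      Real.exp_injective.injOn, setIntegral_univ]
    congr 1
    funext x
    have hx := Real.exp_pos x
    have hind : indicator (Ici (2 : ℝ)) (fun _ => (1 : ℝ)) (Real.exp x)
        = indicator (Ici L) (fun _ => 1) x := by
      simp only [indicator, mem_Ici, hL, Real.log_le_iff_le_exp two_pos]
    rw [abs_of_pos hx, smul_eq_mul, mul_div_cancel₀ _ hx.ne', hind, ← argExp_eq]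
  obtain ⟨h1, h2⟩ := integral_argExp_Iic L
  obtain ⟨h3, h4⟩ := integral_argExp_Ioi L
  have e1 : EqOn argExp f (Iio L) := fun x hx => by
    simp [hf, indicator, not_le.2 (mem_Iio.1 hx)]
  have e2 : EqOn (fun x => argExp x - Real.pi / 2) f (Ici L) := fun x hx => by
    simp [hf, indicator, mem_Ici.1 hx]
  have h5 : IntegrableOn f (Iio L) :=
    (h1.mono_set Iio_subset_Iic_self).congr_fun e1 measurableSet_Iio
  have h6 : IntegrableOn f (Ici L) :=
    ((integrableOn_Ici_iff_integrableOn_Ioi).2 h3).congr_fun e2 measurableSet_Ici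
  have h7 : ∫ x, f x = (∫ x in Iio L, f x) + ∫ x in Ici L, f x := by
    rw [← setIntegral_union (Iio_disjoint_Ici le_rfl) measurableSet_Ici h5 h6,
      Iio_union_Ici, setIntegral_univ]
  rw [hsub, h7, ← setIntegral_congr_fun measurableSet_Iio e1,
    ← setIntegral_congr_fun measurableSet_Ici e2, ← integral_Iic_eq_integral_Iio, h2,
    integral_Ici_eq_integral_Ioi, h4, Real.log_sqrt Real.pi_pos.le,
    Real.log_mul two_ne_zero Real.pi_ne_zero]
  ring

end

/-- Evaluation of the integral `(1/π)∫₀^∞ (Im H(t) - (π/2)χ_{[2,∞)}(t)) dt/t = ½ log(2π)`,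
where `H` is the normalized conformal map of the upper half-plane onto `Ω*`. -/
theorem integral_eval (H : ℂ → ℂ)
    (hcont : ContinuousOn H (closure UHP))
    (hmaps : MapsTo H (closure UHP) (closure Ωstar))
    (hholo : DifferentiableOn ℂ H UHP)
    (hbij : BijOn H UHP Ωstar)
    (h0 : H 0 = 0)
    (hlim : Tendsto (fun z => H z / z) (comap (fun z : ℂ => ‖z‖) atTop ⊓ principal UHP)
      (nhds 1)) :
    (1 / Real.pi) * ∫ t in Ioi (0 : ℝ),
        ((H t).im - (Real.pi / 2) * indicator (Ici (2 : ℝ)) (fun _ => 1) t) / t =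
      (1 / 2) * Real.log (2 * Real.pi) := by
  have hEq := eq_modelMap hcont hholo hbij h0 hlim
  have hval_int := integral_modelMap
  have hre : ∀ t : ℝ, H t = modelMap t := fun t => hEq (mem_closure_UHP.2 (by simp))
  simp only [hre]
  rw [hval_int]
  field_simp
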